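/- arXiv:2007.11054 — 5 statements merged into one kernel-verified Lean document; each statement's English description precedes it below -/
import Mathlib

section
/- For all m, m' ∈ ℕ^n one has the Minkowski sum identity S_A(m + m') = S_A(m) + S_A(m'): every element of S_A(m + m') can be written as x + y with x ∈ S_A(m) and y ∈ S_A(m'), and conversely every such sum x + y lies in S_A(m + m'). (This is the type-A case of the paper's Lemma that S_w(λ) + S_w(μ) = S_w(λ + μ).) -/
open Finset
open scoped Pointwise

/-- The lattice-point set `S_A(m)` of the polytope `P_w(λ)` in type `A_n`, where
`w = s_1 ⋯ s_{n-1} s_n s_{n-1} ⋯ s_1` and `λ = m_1 ω_1 + ⋯ + m_n ω_n`.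
A point is a pair `(a, b)` of 1-based tuples of nonnegative integers, with coordinates
`a_1, …, a_n` and `b_2, …, b_n` (all other coordinates vanish), subject to the
Dyck-path inequalities (A1)–(A3) and the degree-path inequalities (A4). -/
def SA (n : ℕ) (m : ℕ → ℕ) : Set ((ℕ → ℕ) × (ℕ → ℕ)) :=
  {x | (∀ l, (l = 0 ∨ n < l) → x.1 l = 0) ∧
    (∀ l, (l ≤ 1 ∨ n < l) → x.2 l = 0) ∧
    (∀ j, 1 ≤ j → j < n →
      ∑ l ∈ Icc 1 j, x.1 l ≤ ∑ l ∈ Icc 1 j, m l) ∧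
    (∀ i, 2 ≤ i → i ≤ n →
      ∑ l ∈ Icc i n, x.2 l ≤ ∑ l ∈ Icc i n, m l) ∧
    (∀ t, 1 ≤ t → t < n →
      (∑ l ∈ Icc 1 t, x.1 l) + x.1 n + ∑ l ∈ Icc (t + 1) n, x.2 l ≤ ∑ l ∈ Icc 1 n, m l) ∧
    (∀ i r, 2 ≤ i → i < n → i ≤ r → r < n →
      (∑ l ∈ Icc 1 r, x.1 l) + x.1 n + ∑ l ∈ Icc i n, x.2 l ≤
        (∑ l ∈ Icc 1 n, m l) + ∑ l ∈ Icc i r, m l)}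

/-!
A point `(a, b)` lies in `S_A(m)` iff `m = u + d` with `d_1 + ⋯ + d_n = a_n`, where `u` bounds the
initial sums of `a_1, …, a_{n-1}` and the final sums of `b_2, …, b_n`. Indeed (A3) and (A4) together
say that, for `i ≤ r + 1`, `a_n` is at most the slack of `a_1 + ⋯ + a_r` in (A1) plus the slack of
`b_i + ⋯ + b_n` in (A2). So the running maximum over `i` of `a_n` minus the slack in (A2) stays
below the slacks in (A1), and its increments can be taken as `d`.

For fixed `u` and `d` the conditions decouple: a decomposition `m + m' = u + d` refines to
`m = u₁ + d₁`, `m' = u₂ + d₂`, and `a` and `b` are then split greedily, one coordinate at a time.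
-/

section RefinementMonoid

variable {M : Type*} [AddCommMonoid M] [LinearOrder M] [CanonicallyOrderedAdd M]
  [IsOrderedCancelAddMonoid M] {x y z w a : M}

theorem exists_add_refinement (h : x + y = z + w) :
    ∃ x₁ x₂ y₁ y₂, x₁ + x₂ = x ∧ y₁ + y₂ = y ∧ x₁ + y₁ = z ∧ x₂ + y₂ = w := by
  rcases le_total x z with hxz | hzx
  · obtain ⟨c, rfl⟩ := exists_add_of_le hxz
    rw [add_assoc, add_right_inj] at h
    exact ⟨x, 0, c, w, add_zero x, h.symm, rfl, zero_add w⟩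
  · obtain ⟨c, rfl⟩ := exists_add_of_le hzx
    rw [add_assoc, add_right_inj] at h
    exact ⟨z, c, 0, y, rfl, zero_add y, add_zero z, h⟩

theorem exists_add_refinement_pi {ι : Type*} {x y z w : ι → M} (h : x + y = z + w) :
    ∃ x₁ x₂ y₁ y₂, x₁ + x₂ = x ∧ y₁ + y₂ = y ∧ x₁ + y₁ = z ∧ x₂ + y₂ = w := by
  choose x₁ x₂ y₁ y₂ hx hy hz hw using fun i ↦ exists_add_refinement (congrFun h i)
  exact ⟨x₁, x₂, y₁, y₂, funext hx, funext hy, funext hz, funext hw⟩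

theorem exists_add_eq_of_add_add_le (hx : x ≤ z) (hy : y ≤ w) (h : x + y + a ≤ z + w) :
    ∃ p q, p + q = a ∧ x + p ≤ z ∧ y + q ≤ w := by
  obtain ⟨z, rfl⟩ := exists_add_of_le hx
  obtain ⟨w, rfl⟩ := exists_add_of_le hy
  rw [add_add_add_comm, add_le_add_iff_left] at h
  obtain ⟨c, hc⟩ := exists_add_of_le h
  obtain ⟨p, q, _, _, rfl, -, rfl, rfl⟩ := exists_add_refinement hc.symm
  exact ⟨p, q, rfl, by gcongr; exact le_self_add, by gcongr; exact le_self_add⟩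

end RefinementMonoid

section InitialSums

variable {ι M : Type*} [LinearOrder ι] [AddCommMonoid M]

section Preorder

variable [Preorder M]

/-- Domination of initial sums: every sum of `f` over an initial segment `{l ∈ s | l ≤ r}` is at
most the corresponding sum of `u`. -/
def InitialSumsLE (s : Finset ι) (f u : ι → M) : Prop :=
  ∀ r ∈ s, ∑ l ∈ s with l ≤ r, f l ≤ ∑ l ∈ s with l ≤ r, u l

namespace InitialSumsLE

variable {s : Finset ι} {c : ι} {f u : ι → M}

theorem sum_le_sum (h : InitialSumsLE s f u) : ∑ l ∈ s, f l ≤ ∑ l ∈ s, u l := by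
  rcases s.eq_empty_or_nonempty with rfl | hs
  · simp
  · have filter_max : {l ∈ s | l ≤ s.max' hs} = s := filter_true_of_mem s.le_max'
    simpa only [filter_max] using h _ (s.max'_mem hs)

theorem insert_iff (hc : ∀ l ∈ s, l < c) :
    InitialSumsLE (insert c s) f u ↔
      InitialSumsLE s f u ∧ ∑ l ∈ insert c s, f l ≤ ∑ l ∈ insert c s, u l := by
  have filter_top : {l ∈ insert c s | l ≤ c} = insert c s :=
    filter_true_of_mem <| forall_mem_insert .. |>.2 ⟨le_rfl, fun l hl ↦ (hc l hl).le⟩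
  have filter_lower (r) (hr : r ∈ s) : {l ∈ insert c s | l ≤ r} = {l ∈ s | l ≤ r} := by
    rw [filter_insert, if_neg (hc r hr).not_ge]
  unfold InitialSumsLE
  rw [forall_mem_insert, filter_top, and_comm]
  exact and_congr_left' (forall₂_congr fun r hr ↦ by rw [filter_lower r hr])

theorem insert_update (hc : ∀ l ∈ s, l < c) (h : InitialSumsLE s f u) {b : M}
    (hb : ∑ l ∈ s, f l + b ≤ ∑ l ∈ insert c s, u l) :
    InitialSumsLE (insert c s) (Function.update f c b) u := by
  have hcs : c ∉ s := fun h ↦ (hc c h).false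
  refine (insert_iff hc).2 ⟨fun r hr ↦ ?_, ?_⟩
  · rw [sum_update_of_notMem fun h ↦ hcs (mem_of_mem_filter c h)]
    exact h r hr
  · rwa [sum_insert hcs, Function.update_self, sum_update_of_notMem hcs, add_comm]

end InitialSumsLE

theorem initialSumsLE_Icc_iff [LocallyFiniteOrder ι] {a b : ι} {f u : ι → M} :
    InitialSumsLE (Icc a b) f u ↔
      ∀ r ∈ Icc a b, ∑ l ∈ Icc a r, f l ≤ ∑ l ∈ Icc a r, u l := by
  refine forall₂_congr fun r hr ↦ ?_
  have filter_eq : {l ∈ Icc a b | l ≤ r} = Icc a r := by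
    ext l
    simp only [mem_filter, mem_Icc] at hr ⊢
    exact ⟨fun h ↦ ⟨h.1.1, h.2⟩, fun h ↦ ⟨⟨h.1, h.2.trans hr.2⟩, h.2⟩⟩
  rw [filter_eq]

end Preorder

section LinearOrder

variable [LinearOrder M] [CanonicallyOrderedAdd M] [IsOrderedCancelAddMonoid M]

theorem InitialSumsLE.exists_add_eq {s : Finset ι} {f u v : ι → M}
    (h : InitialSumsLE s f (u + v)) :
    ∃ p q, p + q = f ∧ InitialSumsLE s p u ∧ InitialSumsLE s q v := by
  induction s using Finset.induction_on_max with
  | empty => exact ⟨f, 0, add_zero f, by simp [InitialSumsLE], by simp [InitialSumsLE]⟩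
  | insert c s hc ih =>
    have hcs : c ∉ s := fun h ↦ (hc c h).false
    rw [InitialSumsLE.insert_iff hc] at h
    obtain ⟨p, q, rfl, hp, hq⟩ := ih h.1
    have hle : ∑ l ∈ s, p l + ∑ l ∈ s, q l + (p c + q c) ≤
        ∑ l ∈ insert c s, u l + ∑ l ∈ insert c s, v l := by
      simpa only [Pi.add_apply, sum_add_distrib, sum_insert hcs, add_comm, add_left_comm] using h.2
    obtain ⟨α, β, hαβ, hα, hβ⟩ := exists_add_eq_of_add_add_le
      (hp.sum_le_sum.trans <| sum_le_sum_of_subset (subset_insert c s))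
      (hq.sum_le_sum.trans <| sum_le_sum_of_subset (subset_insert c s)) hle
    refine ⟨Function.update p c α, Function.update q c β, ?_, hp.insert_update hc hα,
      hq.insert_update hc hβ⟩
    rw [← Function.update_add, hαβ, ← Pi.add_apply, Function.update_eq_self]

variable [LocallyFiniteOrder ι] {a b : ι} {f u v : ι → M}

theorem exists_add_eq_of_sum_Icc_left_le
    (h : ∀ r ∈ Icc a b, ∑ l ∈ Icc a r, f l ≤ ∑ l ∈ Icc a r, (u + v) l) :
    ∃ p q, p + q = f ∧ (∀ r ∈ Icc a b, ∑ l ∈ Icc a r, p l ≤ ∑ l ∈ Icc a r, u l) ∧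
      ∀ r ∈ Icc a b, ∑ l ∈ Icc a r, q l ≤ ∑ l ∈ Icc a r, v l := by
  simpa only [initialSumsLE_Icc_iff] using (initialSumsLE_Icc_iff.2 h).exists_add_eq

open OrderDual in
theorem exists_add_eq_of_sum_Icc_right_le
    (h : ∀ r ∈ Icc a b, ∑ l ∈ Icc r b, f l ≤ ∑ l ∈ Icc r b, (u + v) l) :
    ∃ p q, p + q = f ∧ (∀ r ∈ Icc a b, ∑ l ∈ Icc r b, p l ≤ ∑ l ∈ Icc r b, u l) ∧
      ∀ r ∈ Icc a b, ∑ l ∈ Icc r b, q l ≤ ∑ l ∈ Icc r b, v l := by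
  have h' : ∀ r ∈ Icc (toDual b) (toDual a),
      ∑ l ∈ Icc (toDual b) r, (f ∘ ofDual) l ≤
        ∑ l ∈ Icc (toDual b) r, (u ∘ ofDual + v ∘ ofDual) l := by
    simpa [Icc_toDual, OrderDual.forall, and_comm] using h
  obtain ⟨p, q, hpq, hp, hq⟩ := exists_add_eq_of_sum_Icc_left_le h'
  refine ⟨p ∘ toDual, q ∘ toDual, congrArg (· ∘ toDual) hpq, ?_, ?_⟩
  · simpa [Icc_toDual, OrderDual.forall, and_comm] using hp
  · simpa [Icc_toDual, OrderDual.forall, and_comm] using hq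

end LinearOrder

end InitialSums

theorem sum_Ico_tsub {M : Type*} [AddCommMonoid M] [PartialOrder M] [Sub M] [OrderedSub M]
    [AddLeftMono M] [AddLeftReflectLE M] [ExistsAddOfLE M] {f : ℕ → M} (hf : Monotone f) {i j : ℕ}
    (hij : i ≤ j) : ∑ l ∈ Ico i j, (f (l + 1) - f l) = f j - f i := by
  induction j, hij using Nat.le_induction with
  | base => rw [Ico_self, sum_empty, tsub_eq_of_eq_add (zero_add (f i)).symm]
  | succ j hij ih =>
    rw [sum_Ico_succ_top hij, ih, add_comm, tsub_add_tsub_cancel (hf j.le_succ) (hf hij)]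

theorem sum_Icc_add_sum_Icc {M : Type*} [AddCommMonoid M] (f : ℕ → M) {k i r n : ℕ} (hi : k ≤ i)
    (hir : i ≤ r + 1) (hr : r ≤ n) :
    ∑ l ∈ Icc k r, f l + ∑ l ∈ Icc i n, f l = ∑ l ∈ Icc k n, f l + ∑ l ∈ Icc i r, f l := by
  have union_eq : Icc k r ∪ Icc i n = Icc k n := by grind
  have inter_eq : Icc k r ∩ Icc i n = Icc i r := by grind
  rw [← sum_union_inter, union_eq, inter_eq]

/-- The piece of `SA n (u + d)` in which the `d`-part of the weight is used up by `a_n`, and the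
`u`-part bounds the initial sums of `a_1, …, a_{n-1}` and the final sums of `b_2, …, b_n`. -/
def SACell (n : ℕ) (u d : ℕ → ℕ) : Set ((ℕ → ℕ) × (ℕ → ℕ)) :=
  {x | (∀ l, (l = 0 ∨ n < l) → x.1 l = 0) ∧
    (∀ l, (l ≤ 1 ∨ n < l) → x.2 l = 0) ∧
    x.1 n = ∑ l ∈ Icc 1 n, d l ∧
    (∀ j ∈ Icc 1 (n - 1), ∑ l ∈ Icc 1 j, x.1 l ≤ ∑ l ∈ Icc 1 j, u l) ∧
    ∀ i ∈ Icc 2 n, ∑ l ∈ Icc i n, x.2 l ≤ ∑ l ∈ Icc i n, u l}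

section SA

variable {n i j r : ℕ} {m u d u' d' : ℕ → ℕ} {x y : (ℕ → ℕ) × (ℕ → ℕ)}

theorem add_mem_SACell (hx : x ∈ SACell n u d) (hy : y ∈ SACell n u' d') :
    x + y ∈ SACell n (u + u') (d + d') := by
  obtain ⟨hx₁, hx₂, hxd, hxa, hxb⟩ := hx
  obtain ⟨hy₁, hy₂, hyd, hya, hyb⟩ := hy
  simp only [SACell, Set.mem_ofPred_eq, Prod.fst_add, Prod.snd_add, Pi.add_apply, sum_add_distrib]
  exact ⟨fun l hl ↦ by rw [hx₁ l hl, hy₁ l hl], fun l hl ↦ by rw [hx₂ l hl, hy₂ l hl],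
    by rw [hxd, hyd], fun j hj ↦ add_le_add (hxa j hj) (hya j hj),
    fun i hi ↦ add_le_add (hxb i hi) (hyb i hi)⟩

theorem SACell_add_subset : SACell n (u + u') (d + d') ⊆ SACell n u d + SACell n u' d' := by
  rintro ⟨a, b⟩ ⟨ha₀, hb₀, han, ha, hb⟩
  obtain ⟨p, q, rfl, hp, hq⟩ := exists_add_eq_of_sum_Icc_left_le ha
  obtain ⟨s, t, rfl, hs, ht⟩ := exists_add_eq_of_sum_Icc_right_le hb
  -- `a_n` is not constrained by initial sums, so it is redistributed to match `d` and `d'`.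
  set p' := Function.update p n (∑ l ∈ Icc 1 n, d l)
  set q' := Function.update q n (∑ l ∈ Icc 1 n, d' l)
  have hpq : p' + q' = p + q := by
    rw [← Function.update_add, Function.update_eq_iff]
    simpa [sum_add_distrib] using han.symm
  have sum_update (f : ℕ → ℕ) (c : ℕ) {j : ℕ} (hj : j ∈ Icc 1 (n - 1)) :
      ∑ l ∈ Icc 1 j, Function.update f n c l = ∑ l ∈ Icc 1 j, f l :=
    sum_update_of_notMem (by simp only [mem_Icc] at hj ⊢; omega) f c
  rw [← hpq] at ha₀
  simp only [Pi.add_apply, Nat.add_eq_zero_iff] at ha₀ hb₀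
  refine ⟨(p', s), ⟨fun l hl ↦ (ha₀ l hl).1, fun l hl ↦ (hb₀ l hl).1, Function.update_self ..,
    fun j hj ↦ (sum_update p _ hj).trans_le (hp j hj), hs⟩,
    (q', t), ⟨fun l hl ↦ (ha₀ l hl).2, fun l hl ↦ (hb₀ l hl).2, Function.update_self ..,
    fun j hj ↦ (sum_update q _ hj).trans_le (hq j hj), ht⟩, ?_⟩
  exact congrArg (·, s + t) hpq

theorem SACell_subset_SA : SACell n u d ⊆ SA n (u + d) := by
  rintro ⟨a, b⟩ ⟨ha₀, hb₀, han, ha, hb⟩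
  simp only [mem_Icc] at han ha hb
  have path_le {i r : ℕ} (hi : 2 ≤ i) (hir : i ≤ r + 1) (hr : r < n) :
      ∑ l ∈ Icc 1 r, a l + a n + ∑ l ∈ Icc i n, b l ≤
        ∑ l ∈ Icc 1 n, (u + d) l + ∑ l ∈ Icc i r, u l := calc
    _ ≤ ∑ l ∈ Icc 1 r, u l + ∑ l ∈ Icc 1 n, d l + ∑ l ∈ Icc i n, u l :=
      add_le_add (add_le_add (ha r (by omega)) han.le) (hb i (by omega))
    _ = ∑ l ∈ Icc 1 n, (u + d) l + ∑ l ∈ Icc i r, u l := by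
      rw [add_right_comm, sum_Icc_add_sum_Icc u (by omega) hir hr.le, add_right_comm]
      simp only [Pi.add_apply, sum_add_distrib]
  have hu : u ≤ u + d := le_self_add
  refine ⟨ha₀, hb₀, fun j hj hjn ↦ ?_, fun i hi hin ↦ ?_, fun t ht htn ↦ ?_,
    fun i r hi _ hir hr ↦ ?_⟩
  · exact (ha j (by omega)).trans (sum_le_sum fun l _ ↦ hu l)
  · exact (hb i ⟨hi, hin⟩).trans (sum_le_sum fun l _ ↦ hu l)
  · simpa using path_le (by omega : 2 ≤ t + 1) le_rfl htn
  · exact (path_le hi (by omega) hr).trans <| by gcongr; exact hu _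

theorem sum_add_sum_le_of_mem_SA (hx : x ∈ SA n m) (hi : 2 ≤ i) (hir : i ≤ r + 1) (hr : r < n) :
    ∑ l ∈ Icc 1 r, x.1 l + x.1 n + ∑ l ∈ Icc i n, x.2 l ≤
      ∑ l ∈ Icc 1 r, m l + ∑ l ∈ Icc i n, m l := by
  obtain ⟨-, -, -, -, dyck, degree⟩ := hx
  rw [sum_Icc_add_sum_Icc m (by omega) hir hr.le]
  rcases hir.eq_or_lt with rfl | hir
  · simpa using dyck r (by omega) hr
  · exact degree i r hi (by omega) (by omega) hr

/-- The amount of `a_n` that must be taken from `m_1, …, m_{i-1}`, because the part of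
`m_i, …, m_n` not needed by `b_i, …, b_n` is too small for it. -/
def tailDemand (n : ℕ) (m : ℕ → ℕ) (x : (ℕ → ℕ) × (ℕ → ℕ)) (i : ℕ) : ℕ :=
  x.1 n - (∑ l ∈ Icc i n, m l - ∑ l ∈ Icc i n, x.2 l)

theorem tailDemand_le_fst : tailDemand n m x i ≤ x.1 n :=
  tsub_le_self

theorem tailDemand_add_one_self : tailDemand n m x (n + 1) = x.1 n := by
  simp [tailDemand]

theorem tailDemand_add_one_le (i : ℕ) :
    tailDemand n m x (i + 1) ≤ tailDemand n m x i + m i := by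
  unfold tailDemand
  rcases le_or_gt i n with hin | hni
  · rw [← add_sum_Ioc_eq_sum_Icc hin, ← add_sum_Ioc_eq_sum_Icc hin, ← Icc_add_one_left_eq_Ioc]
    omega
  · rw [Icc_eq_empty_of_lt hni, Icc_eq_empty_of_lt (hni.trans i.lt_succ_self)]
    simp

theorem tailDemand_eq_zero_of_le_one (hn : 2 ≤ n) (hx : x ∈ SA n m) (hi : i ≤ 1) :
    tailDemand n m x i = 0 := by
  have ⟨_, snd_eq_zero, _, _, dyck, _⟩ := hx
  have sum_snd : ∑ l ∈ Icc i n, x.2 l = ∑ l ∈ Icc 2 n, x.2 l := by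
    refine (sum_subset (Icc_subset_Icc_left (by omega)) fun l hl hl' ↦ snd_eq_zero l ?_).symm
    simp only [mem_Icc] at hl hl'
    omega
  have sum_m : ∑ l ∈ Icc 1 n, m l ≤ ∑ l ∈ Icc i n, m l :=
    sum_le_sum_of_subset (Icc_subset_Icc_left hi)
  have dyck_one : ∑ l ∈ Icc 1 1, x.1 l + x.1 n + ∑ l ∈ Icc 2 n, x.2 l ≤ ∑ l ∈ Icc 1 n, m l :=
    dyck 1 le_rfl hn
  unfold tailDemand
  omega

theorem tailDemand_le_slack (hx : x ∈ SA n m) (hr : r ∈ Icc 1 (n - 1)) (hir : i ≤ r + 1) :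
    tailDemand n m x i ≤ ∑ l ∈ Icc 1 r, m l - ∑ l ∈ Icc 1 r, x.1 l := by
  rw [mem_Icc] at hr
  rcases le_or_gt i 1 with hi | hi
  · exact (tailDemand_eq_zero_of_le_one (by omega) hx hi).trans_le (Nat.zero_le _)
  · have ⟨_, _, initial_le, final_le, _⟩ := hx
    have initial_le := initial_le r hr.1 (by omega)
    have final_le := final_le i hi (by omega)
    have path_le := sum_add_sum_le_of_mem_SA hx hi hir (by omega)
    unfold tailDemand
    omega

/-- The part of the weight `m` charged to the coordinate `a_n` of `x`: it is taken from
`m_1, m_2, …` as late as the demands of the tails allow. -/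
def chargedWeight (n : ℕ) (m : ℕ → ℕ) (x : (ℕ → ℕ) × (ℕ → ℕ)) (i : ℕ) : ℕ :=
  partialSups (tailDemand n m x) (i + 1) - partialSups (tailDemand n m x) i

theorem chargedWeight_le : chargedWeight n m x ≤ m := fun i ↦ by
  have step_le : partialSups (tailDemand n m x) (i + 1) ≤
      partialSups (tailDemand n m x) i + m i := by
    rw [partialSups_add_one]
    exact sup_le le_self_add <| (tailDemand_add_one_le i).trans <| by
      gcongr; exact le_partialSups _ i
  exact tsub_le_iff_left.2 step_le

theorem sum_Icc_chargedWeight (hij : i ≤ j + 1) :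
    ∑ l ∈ Icc i j, chargedWeight n m x l =
      partialSups (tailDemand n m x) (j + 1) - partialSups (tailDemand n m x) i := by
  rw [← Ico_add_one_right_eq_Icc]
  exact sum_Ico_tsub (partialSups _).monotone hij

theorem sum_Icc_one_chargedWeight (hn : 2 ≤ n) (hx : x ∈ SA n m) :
    ∑ l ∈ Icc 1 r, chargedWeight n m x l = partialSups (tailDemand n m x) (r + 1) := by
  have partialSups_one : partialSups (tailDemand n m x) 1 = 0 :=
    Nat.le_zero.1 <| partialSups_le _ _ _ fun i hi ↦
      (tailDemand_eq_zero_of_le_one hn hx hi).le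
  rw [sum_Icc_chargedWeight (by omega), partialSups_one, tsub_zero]

theorem partialSups_tailDemand_add_one_self :
    partialSups (tailDemand n m x) (n + 1) = x.1 n :=
  (partialSups_le _ _ _ fun _ _ ↦ tailDemand_le_fst).antisymm <|
    tailDemand_add_one_self.ge.trans <| le_partialSups _ _

theorem mem_SACell_chargedWeight (hn : 2 ≤ n) (hx : x ∈ SA n m) :
    x ∈ SACell n (m - chargedWeight n m x) (chargedWeight n m x) := by
  have sum_sub (s : Finset ℕ) : ∑ l ∈ s, (m - chargedWeight n m x) l =
      ∑ l ∈ s, m l - ∑ l ∈ s, chargedWeight n m x l :=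
    sum_tsub_distrib s fun l _ ↦ chargedWeight_le l
  have ⟨fst_eq_zero, snd_eq_zero, initial_le, final_le, _⟩ := hx
  refine ⟨fst_eq_zero, snd_eq_zero, ?_, fun j hj ↦ ?_, fun i hi ↦ ?_⟩
  · rw [sum_Icc_one_chargedWeight hn hx, partialSups_tailDemand_add_one_self]
  · have charged_le : partialSups (tailDemand n m x) (j + 1) ≤
        ∑ l ∈ Icc 1 j, m l - ∑ l ∈ Icc 1 j, x.1 l :=
      partialSups_le _ _ _ fun i hi ↦ tailDemand_le_slack hx hj hi
    rw [mem_Icc] at hj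
    have initial_le := initial_le j hj.1 (by omega)
    rw [sum_sub, sum_Icc_one_chargedWeight hn hx]
    omega
  · rw [mem_Icc] at hi
    have demand_le : x.1 n - (∑ l ∈ Icc i n, m l - ∑ l ∈ Icc i n, x.2 l) ≤
        partialSups (tailDemand n m x) i := le_partialSups (tailDemand n m x) i
    have final_le := final_le i hi.1 hi.2
    rw [sum_sub, sum_Icc_chargedWeight (by omega), partialSups_tailDemand_add_one_self]
    omega

theorem mem_SA_iff_exists_mem_SACell (hn : 2 ≤ n) :
    x ∈ SA n m ↔ ∃ u d, u + d = m ∧ x ∈ SACell n u d := by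
  constructor
  · exact fun hx ↦ ⟨m - chargedWeight n m x, chargedWeight n m x,
      tsub_add_cancel_of_le chargedWeight_le, mem_SACell_chargedWeight hn hx⟩
  · rintro ⟨u, d, rfl, hx⟩
    exact SACell_subset_SA hx

end SA

/-- Minkowski sum property `S_A(m + m') = S_A(m) + S_A(m')` (type `A` case of the paper's
Lemma `S_w(λ) + S_w(μ) = S_w(λ + μ)`). -/
theorem SA_add_eq_minkowski (n : ℕ) (hn : 2 ≤ n) (m m' : ℕ → ℕ) :
    SA n (m + m') = SA n m + SA n m' := by
  ext x
  simp only [Set.mem_add, mem_SA_iff_exists_mem_SACell hn]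
  constructor
  · rintro ⟨u, d, hud, hx⟩
    obtain ⟨u₁, u₂, d₁, d₂, rfl, rfl, hm, hm'⟩ := exists_add_refinement_pi hud
    obtain ⟨y, hy, z, hz, rfl⟩ := SACell_add_subset hx
    exact ⟨y, ⟨u₁, d₁, hm, hy⟩, z, ⟨u₂, d₂, hm', hz⟩, rfl⟩
  · rintro ⟨y, ⟨u₁, d₁, rfl, hy⟩, z, ⟨u₂, d₂, rfl, hz⟩, rfl⟩
    exact ⟨u₁ + u₂, d₁ + d₂, add_add_add_comm .., add_mem_SACell hy hz⟩
end

section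
/- For all m, m' ∈ ℕ^n one has the Minkowski sum identity S_C(m + m') = S_C(m) + S_C(m'): every element of S_C(m + m') can be written as x + y with x ∈ S_C(m) and y ∈ S_C(m'), and conversely every such sum x + y lies in S_C(m + m'). (This is the type-C case of the paper's Lemma that S_w(λ) + S_w(μ) = S_w(λ + μ).) -/
open Finset
open scoped Pointwise

/-- The lattice-point set `S_C(m)` of the polytope `P_w(λ)` in type `C_n`, where
`w = s_1 ⋯ s_{n-1} s_n s_{n-1} ⋯ s_1` and `λ = m_1 ω_1 + ⋯ + m_n ω_n`.
A point is a 1-based tuple `c_1, …, c_{2n-1}` of nonnegative integers (all other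
coordinates vanish), subject to the Dyck-path inequalities (C1)–(C2), the degree-path
inequalities (C3) and the inequalities (C4) from paths with coefficients. -/
def SC (n : ℕ) (m : ℕ → ℕ) : Set (ℕ → ℕ) :=
  {c | (∀ l, (l = 0 ∨ 2 * n - 1 < l) → c l = 0) ∧
    (∀ j, 1 ≤ j → j < n →
      ∑ l ∈ Icc 1 j, c l ≤ ∑ l ∈ Icc 1 j, m l) ∧
    ((∑ l ∈ Icc 1 (n - 1), c l) + c (2 * n - 1) ≤ ∑ l ∈ Icc 1 n, m l) ∧
    (∀ j, 2 ≤ j → j ≤ n →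
      (∑ l ∈ Icc 1 (2 * n - j), c l) + c (2 * n - 1) ≤
        (∑ l ∈ Icc 1 (j - 1), m l) + 2 * ∑ l ∈ Icc j n, m l) ∧
    (∀ j k, 2 ≤ j → j ≤ n → j - 1 ≤ k → k < n →
      2 * (∑ l ∈ Icc 1 k, c l) + (∑ l ∈ Icc (k + 1) (2 * n - j), c l) + 2 * c (2 * n - 1) ≤
        (∑ l ∈ Icc 1 (j - 1), m l) + 2 * (∑ l ∈ Icc j n, m l) + ∑ l ∈ Icc 1 k, m l)}

/-!
Write `e_i` for the `i`-th unit vector, `C` and `M` for the prefix sums of `c` and `m`, and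
`z = c_{2n-1}`. In these terms the inequalities are additive, which gives one inclusion. For the
other one it suffices, by induction on the size of `m + m'`, to remove from `c ∈ S_C(e_i + m)` a
point of `S_C(e_i)` and remain in `S_C(m)`, where `i` is at most every index in the support of `m`.
If `z > 0` and `C(k) ≤ M(k)` for all `k < n`, remove `e_{2n-1}`. Otherwise remove `e_p + e_q`, where
`p` is the first nonzero position of `c` and `q` is the first nonzero position of `c - e_p` with
`2n - i ≤ q ≤ 2n - 2`, each term being omitted if there is no such position: then `z = 0` or some
Dyck-path inequality `C(k) ≤ M(k) + 1` with `i ≤ k` is tight, and a tight one controls `z`.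
-/

/-- The prefix sums `c_1 + ⋯ + c_t` of a 1-based sequence; the junk entry `c 0` is not counted. -/
def prefixSum (c : ℕ → ℕ) (t : ℕ) : ℕ := ∑ l ∈ Icc 1 t, c l

/-- The prefix sums of the unit vector `e_i`. -/
def unitStep (i t : ℕ) : ℕ := if i ≤ t then 1 else 0

/-- The inequalities (C1)–(C4) in terms of the prefix sums `M` of `m`, the prefix sums `C` of `c`
and `z = c_{2n-1}`. Here `j` is the paper's `j - 1`, and (C2) is the case `j = n` of `degree`. -/
structure PathIneq (n : ℕ) (M C : ℕ → ℕ) (z : ℕ) : Prop where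
  dyck : ∀ k < n, C k ≤ M k
  degree : ∀ j, 1 ≤ j → j ≤ n → C (2 * n - 1 - j) + z + M j ≤ 2 * M n
  coeff : ∀ j k, 1 ≤ j → j ≤ k → k < n →
    C k + C (2 * n - 1 - j) + 2 * z + M j ≤ 2 * M n + M k

/-- The number of units among the first `s` that are removed when the first unit and the first one
after both it and the first `a` are removed. With `s = C t` and `a = C (2 * n - 1 - i)` these are
the prefix sums of the point `e_p + e_q` to be split off. -/
def twoStep (a s : ℕ) : ℕ := min s 1 + min (s - max a 1) 1

/-- Past `a`, either both units have been removed or what is left has not grown since `a`. -/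
theorem twoStep_eq_two_or_sub_eq {a s : ℕ} (h : a ≤ s) :
    twoStep a s = 2 ∨ s - twoStep a s = a - twoStep a a := by
  simp only [twoStep]
  omega

theorem twoStep_zero (a : ℕ) : twoStep a 0 = 0 := by simp [twoStep]

theorem monotone_twoStep (a : ℕ) : Monotone (twoStep a) := fun s t hst => by
  simp only [twoStep]
  omega

theorem twoStep_add_le (a s b : ℕ) : twoStep a (s + b) ≤ twoStep a s + b := by
  simp only [twoStep]
  omega

theorem twoStep_le (a s : ℕ) : twoStep a s ≤ s := by
  simp only [twoStep]
  omega

theorem single_one_le {ι : Type*} [DecidableEq ι] {c : ι → ℕ} {i : ι} (h : c i ≠ 0) :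
    Pi.single i 1 ≤ c := by
  intro l
  rcases eq_or_ne l i with rfl | hli
  · rw [Pi.single_eq_same]
    exact Nat.one_le_iff_ne_zero.2 h
  · rw [Pi.single_eq_of_ne hli]
    exact Nat.zero_le _

section PrefixSum

variable {c d : ℕ → ℕ}

theorem prefixSum_zero (c : ℕ → ℕ) : prefixSum c 0 = 0 := by simp [prefixSum]

theorem prefixSum_succ (c : ℕ → ℕ) (t : ℕ) : prefixSum c (t + 1) = prefixSum c t + c (t + 1) :=
  sum_Icc_succ_top (by omega) c

theorem prefixSum_add (c d : ℕ → ℕ) : prefixSum (c + d) = prefixSum c + prefixSum d :=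
  funext fun _ => sum_add_distrib

theorem prefixSum_sub (h : d ≤ c) (t : ℕ) :
    prefixSum (c - d) t = prefixSum c t - prefixSum d t := by
  refine Nat.eq_sub_of_add_eq ?_
  rw [← Pi.add_apply, ← prefixSum_add, tsub_add_cancel_of_le h]

theorem monotone_prefixSum (c : ℕ → ℕ) : Monotone (prefixSum c) := fun _ _ h =>
  sum_le_sum_of_subset (Icc_subset_Icc_right h)

theorem prefixSum_single {i : ℕ} (hi : 1 ≤ i) : prefixSum (Pi.single i 1) = unitStep i := by
  ext t
  simp [prefixSum, unitStep, Pi.single_apply, hi]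

theorem prefixSum_add_sum_Icc (c : ℕ → ℕ) {s t : ℕ} (h : s ≤ t) :
    prefixSum c s + ∑ l ∈ Icc (s + 1) t, c l = prefixSum c t := by
  induction t, h using Nat.le_induction with
  | base => simp
  | succ t hst ih => rw [prefixSum_succ, sum_Icc_succ_top (by omega), ← add_assoc, ih]

theorem exists_first_ne_zero {t : ℕ} (h : prefixSum c t ≠ 0) :
    ∃ i, 1 ≤ i ∧ i ≤ t ∧ c i ≠ 0 ∧ ∀ s < i, prefixSum c s = 0 := by
  have hex : ∃ s, prefixSum c s ≠ 0 := ⟨t, h⟩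
  obtain ⟨i, hi⟩ : ∃ i, Nat.find hex = i + 1 :=
    Nat.exists_eq_succ_of_ne_zero fun h0 => Nat.find_spec hex (by rw [h0, prefixSum_zero])
  have hlow : ∀ s < i + 1, prefixSum c s = 0 := fun s hs =>
    not_not.1 (Nat.find_min hex (hi ▸ hs))
  refine ⟨i + 1, by omega, hi ▸ Nat.find_min' hex h, fun hc => ?_, hlow⟩
  have hne := Nat.find_spec hex
  rw [hi, prefixSum_succ, hlow i (by omega), hc] at hne
  exact hne rfl

theorem exists_le_prefixSum_eq_comp {φ : ℕ → ℕ} (hzero : φ 0 = 0) (hmono : Monotone φ)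
    (hlip : ∀ s a, φ (s + a) ≤ φ s + a) (c : ℕ → ℕ) (N : ℕ) :
    ∃ d ≤ c, (∀ l, N ≤ l → d l = 0) ∧ ∀ t < N, prefixSum d t = φ (prefixSum c t) := by
  let d : ℕ → ℕ := fun l => if l < N then φ (prefixSum c l) - φ (prefixSum c (l - 1)) else 0
  refine ⟨d, fun l => ?_, fun l hl => if_neg (by omega), fun t ht => ?_⟩
  · rcases l with _ | l
    · simp [d]
    · have := hlip (prefixSum c l) (c (l + 1))
      simp only [d, prefixSum_succ, Nat.add_sub_cancel]
      split_ifs <;> omega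
  · induction t with
    | zero => simp only [prefixSum_zero, hzero]
    | succ t ih =>
      have hle : φ (prefixSum c t) ≤ φ (prefixSum c (t + 1)) :=
        hmono (monotone_prefixSum c t.le_succ)
      rw [prefixSum_succ d, ih (by omega)]
      simp only [d, if_pos ht, Nat.add_sub_cancel]
      omega

end PrefixSum

namespace PathIneq

variable {n i z z' : ℕ} {M M' C C' : ℕ → ℕ}

theorem congr (h : PathIneq n M C z) (hM : ∀ t ≤ n, M t = M' t)
    (hC : ∀ t < 2 * n - 1, C t = C' t) : PathIneq n M' C' z where
  dyck k hk := by
    rw [← hM k hk.le, ← hC k (by omega)]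
    exact h.dyck k hk
  degree j hj hjn := by
    rw [← hM j hjn, ← hM n le_rfl, ← hC _ (by omega)]
    exact h.degree j hj hjn
  coeff j k hj hjk hk := by
    rw [← hM j (by omega), ← hM k hk.le, ← hM n le_rfl, ← hC k (by omega), ← hC _ (by omega)]
    exact h.coeff j k hj hjk hk

theorem add (h : PathIneq n M C z) (h' : PathIneq n M' C' z') :
    PathIneq n (M + M') (C + C') (z + z') where
  dyck k hk := add_le_add (h.dyck k hk) (h'.dyck k hk)
  degree j hj hjn := by
    have := h.degree j hj hjn
    have := h'.degree j hj hjn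
    simp only [Pi.add_apply]
    omega
  coeff j k hj hjk hk := by
    have := h.coeff j k hj hjk hk
    have := h'.coeff j k hj hjk hk
    simp only [Pi.add_apply]
    omega

theorem of_dyck_of_degree (hdyck : ∀ k < n, C k ≤ M k)
    (hdegree : ∀ j, 1 ≤ j → j ≤ n → C (2 * n - 1 - j) + M j ≤ 2 * M n) : PathIneq n M C 0 where
  dyck := hdyck
  degree := hdegree
  coeff j k hj hjk hk := by
    have := hdyck k hk
    have := hdegree j hj (by omega)
    omega

theorem zero (hM : Monotone M) : PathIneq n M 0 0 := by
  refine of_dyck_of_degree (fun k _ => Nat.zero_le _) fun j _ hjn => ?_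
  have := hM hjn
  simp only [Pi.zero_apply]
  omega

theorem unitStep_zero_one (hin : i ≤ n) : PathIneq n (unitStep i) 0 1 where
  dyck _ _ := Nat.zero_le _
  degree j _ _ := by
    simp only [unitStep, Pi.zero_apply, if_pos hin]
    split_ifs <;> omega
  coeff j k _ _ _ := by
    simp only [unitStep, Pi.zero_apply, if_pos hin]
    split_ifs <;> omega

theorem of_unitStep_add_of_dyck (hin : i ≤ n) (hM : ∀ t < i, M t = 0)
    (h : PathIneq n (unitStep i + M) C (z + 1)) (hdyck : ∀ k < n, C k ≤ M k) :
    PathIneq n M C z where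
  dyck := hdyck
  degree j hj hjn := by
    have hdeg := h.degree j hj hjn
    simp only [Pi.add_apply, unitStep, if_pos hin] at hdeg
    by_cases hij : i ≤ j
    · rw [if_pos hij] at hdeg
      omega
    · have hcoeff := h.coeff j j hj le_rfl (by omega)
      have hMj := hM j (by omega)
      simp only [Pi.add_apply, unitStep, if_pos hin, if_neg hij] at hcoeff
      omega
  coeff j k hj hjk hk := by
    have hjk_coeff := h.coeff j k hj hjk hk
    have hjj_coeff := h.coeff j j hj le_rfl (by omega)
    have hCk := hdyck k hk
    have hMj := hM j
    simp only [Pi.add_apply, unitStep, if_pos hin] at hjk_coeff hjj_coeff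
    split_ifs at hjk_coeff hjj_coeff <;> omega

theorem eq_zero_of_lt (h : PathIneq n (unitStep i + M) C z) (hin : i ≤ n)
    (hM : ∀ t < i, M t = 0) {k : ℕ} (hk : k < i) : C k = 0 := by
  have hdyck := h.dyck k (by omega)
  simpa only [Pi.add_apply, unitStep, if_neg hk.not_ge, hM k hk, add_zero, Nat.le_zero] using hdyck

theorem unitStep_twoStep (hin : i ≤ n) (hM : ∀ t < i, M t = 0) (hC : Monotone C)
    (h : PathIneq n (unitStep i + M) C z) :
    PathIneq n (unitStep i) (twoStep (C (2 * n - 1 - i)) ∘ C) 0 := by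
  refine of_dyck_of_degree (fun k hk => ?_) fun j hj hjn => ?_
  · have hC_le : C k ≤ C (2 * n - 1 - i) := hC (by omega)
    have hC_zero : k < i → C k = 0 := h.eq_zero_of_lt hin hM
    simp only [Function.comp_apply, twoStep, unitStep]
    split_ifs <;> omega
  · have hC_le : i ≤ j → C (2 * n - 1 - j) ≤ C (2 * n - 1 - i) := fun hij => hC (by omega)
    simp only [Function.comp_apply, twoStep, unitStep, if_pos hin]
    split_ifs <;> omega

/-- This serves both `degree`, with `w = z`, and `coeff` at a tight Dyck path, with `w = 2 * z`. The
case `j < i` reduces to `j = i` by `twoStep_eq_two_or_sub_eq`. -/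
theorem sub_twoStep_add_le {K w : ℕ} (hiK : i ≤ K) (hKn : K ≤ n)
    (hM : ∀ t < i, M t = 0) (hM_mono : Monotone M) (hC : Monotone C)
    (hw : w = 0 ∨ 0 < C (n - 1))
    (hbound : ∀ j, 1 ≤ j → j ≤ K → C (2 * n - 1 - j) + w + unitStep i j + M j ≤ 2 + 2 * M n)
    {j : ℕ} (hj : 1 ≤ j) (hjK : j ≤ K) :
    C (2 * n - 1 - j) - twoStep (C (2 * n - 1 - i)) (C (2 * n - 1 - j)) + w + M j ≤ 2 * M n := by
  have of_ge : ∀ j, 1 ≤ j → i ≤ j → j ≤ K →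
      C (2 * n - 1 - j) - twoStep (C (2 * n - 1 - i)) (C (2 * n - 1 - j)) + w + M j ≤
        2 * M n := by
    intro j hj hij hjK
    have hbound_j := hbound j hj hjK
    have hM_le : M j ≤ M n := hM_mono (by omega)
    have hC_ge : C (n - 1) ≤ C (2 * n - 1 - j) := hC (by omega)
    have hC_le : C (2 * n - 1 - j) ≤ C (2 * n - 1 - i) := hC (by omega)
    simp only [unitStep, if_pos hij] at hbound_j
    simp only [twoStep]
    omega
  rcases le_or_gt i j with hij | hji
  · exact of_ge j hj hij hjK
  · have hMj := hM j hji
    have hC_le : C (2 * n - 1 - i) ≤ C (2 * n - 1 - j) := hC (by omega)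
    rcases twoStep_eq_two_or_sub_eq hC_le with htwo | hsub
    · have hbound_j := hbound j hj hjK
      have htwo_le := twoStep_le (C (2 * n - 1 - i)) (C (2 * n - 1 - j))
      omega
    · have hbound_i := of_ge i (by omega) le_rfl hiK
      omega

theorem sub_twoStep (hin : i ≤ n) (hM : ∀ t < i, M t = 0) (hM_mono : Monotone M)
    (hC : Monotone C) (h : PathIneq n (unitStep i + M) C z)
    (htight : z = 0 ∨ ∃ k, i ≤ k ∧ k < n ∧ C k = M k + 1) :
    PathIneq n M (fun t => C t - twoStep (C (2 * n - 1 - i)) (C t)) z := by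
  have hdyck : ∀ k < n, C k - twoStep (C (2 * n - 1 - i)) (C k) ≤ M k := by
    intro k hk
    have hCk := h.dyck k hk
    simp only [Pi.add_apply, unitStep] at hCk
    simp only [twoStep]
    split_ifs at hCk <;> omega
  have hpos : z = 0 ∨ 0 < C (n - 1) := by
    refine htight.imp_right fun ⟨k, _, hk, hCk⟩ => ?_
    have hC_le : C k ≤ C (n - 1) := hC (by omega)
    omega
  have hdegree : ∀ j, 1 ≤ j → j ≤ n →
      C (2 * n - 1 - j) - twoStep (C (2 * n - 1 - i)) (C (2 * n - 1 - j)) + z + M j ≤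
        2 * M n := by
    intro j hj hjn
    refine sub_twoStep_add_le hin le_rfl hM hM_mono hC hpos (fun j hj hjn => ?_) hj hjn
    have hdeg := h.degree j hj hjn
    simp only [Pi.add_apply, unitStep, if_pos hin] at hdeg ⊢
    omega
  rcases htight with rfl | ⟨k₀, hik₀, hk₀n, htight⟩
  · exact of_dyck_of_degree hdyck hdegree
  refine ⟨hdyck, hdegree, fun j k hj hjk hk => ?_⟩
  rcases le_or_gt j k₀ with hjk₀ | hk₀j
  · have hbound : C (2 * n - 1 - j) - twoStep (C (2 * n - 1 - i)) (C (2 * n - 1 - j)) + 2 * z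
        + M j ≤ 2 * M n := by
      refine sub_twoStep_add_le hik₀ hk₀n.le hM hM_mono hC (by omega) (fun j hj hjk₀ => ?_)
        hj hjk₀
      have hcoeff := h.coeff j k₀ hj hjk₀ hk₀n
      simp only [Pi.add_apply, unitStep, if_pos hin, if_pos hik₀] at hcoeff ⊢
      omega
    have hdyck_k := hdyck k hk
    omega
  · have hcoeff := h.coeff j k hj hjk hk
    have hCk : C k₀ ≤ C k := hC (by omega)
    have hCj : C k₀ ≤ C (2 * n - 1 - j) := hC (by omega)
    simp only [Pi.add_apply, unitStep, if_pos hin, if_pos (show i ≤ j by omega),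
      if_pos (show i ≤ k by omega)] at hcoeff
    simp only [twoStep]
    omega

end PathIneq

section SC

variable {n : ℕ} {m m' c : ℕ → ℕ}

theorem mem_SC_iff : c ∈ SC n m ↔ (∀ l, (l = 0 ∨ 2 * n - 1 < l) → c l = 0) ∧
    PathIneq n (prefixSum m) (prefixSum c) (c (2 * n - 1)) := by
  have hm : ∀ j < n, prefixSum m j + ∑ l ∈ Icc (j + 1) n, m l = prefixSum m n :=
    fun j hj => prefixSum_add_sum_Icc m hj.le
  have hc : ∀ j k, j ≤ k → k < n → prefixSum c k + ∑ l ∈ Icc (k + 1) (2 * n - 1 - j), c l =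
      prefixSum c (2 * n - 1 - j) := fun j k hjk hk => prefixSum_add_sum_Icc c (by omega)
  have hsub (j : ℕ) : 2 * n - (j + 1) = 2 * n - 1 - j := by omega
  refine and_congr_right fun hsupp => ⟨fun ⟨hC1, hC2, hC3, hC4⟩ => ⟨?_, ?_, ?_⟩,
    fun h => ⟨fun k _ hk => h.dyck k hk, ?_, fun j hj hjn => ?_, fun j k hj hjn hjk hk => ?_⟩⟩
  · rintro (_ | k) hk
    · simp only [prefixSum_zero, le_refl]
    · exact hC1 _ k.succ_pos hk
  · intro j hj hjn
    rcases hjn.lt_or_eq with hjn | rfl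
    · have hC3j := hC3 (j + 1) (by omega) hjn
      rw [hsub, Nat.add_sub_cancel, ← prefixSum, ← prefixSum] at hC3j
      have := hm j hjn
      omega
    · rw [← prefixSum, ← prefixSum] at hC2
      rw [show 2 * j - 1 - j = j - 1 by omega]
      omega
  · intro j k hj hjk hk
    have hC4jk := hC4 (j + 1) k (by omega) (by omega) hjk hk
    rw [hsub, Nat.add_sub_cancel, ← prefixSum, ← prefixSum, ← prefixSum] at hC4jk
    have := hm j (by omega)
    have := hc j k hjk hk
    omega
  · rcases Nat.eq_zero_or_pos n with rfl | hn
    · simp [hsupp]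
    · have hdegree := h.degree n hn le_rfl
      rw [show 2 * n - 1 - n = n - 1 by omega] at hdegree
      rw [← prefixSum, ← prefixSum]
      omega
  · obtain ⟨j, rfl⟩ : ∃ i, j = i + 1 := ⟨j - 1, by omega⟩
    rw [hsub, Nat.add_sub_cancel, ← prefixSum, ← prefixSum]
    have := h.degree j (by omega) (by omega)
    have := hm j hjn
    omega
  · obtain ⟨j, rfl⟩ : ∃ i, j = i + 1 := ⟨j - 1, by omega⟩
    rw [hsub, Nat.add_sub_cancel, ← prefixSum, ← prefixSum, ← prefixSum]
    have := h.coeff j k (by omega) hjk hk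
    have := hm j hjn
    have := hc j k hjk hk
    omega

theorem zero_mem_SC (n : ℕ) (m : ℕ → ℕ) : 0 ∈ SC n m := by
  have hzero : prefixSum 0 = 0 := funext fun _ => sum_const_zero
  rw [mem_SC_iff, hzero]
  exact ⟨fun _ _ => rfl, PathIneq.zero (monotone_prefixSum m)⟩

theorem SC_add_SC_subset (n : ℕ) (m m' : ℕ → ℕ) : SC n m + SC n m' ⊆ SC n (m + m') := by
  rintro _ ⟨x, hx, y, hy, rfl⟩
  rw [mem_SC_iff] at hx hy
  simp only [mem_SC_iff, prefixSum_add]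
  exact ⟨fun l hl => by rw [Pi.add_apply, hx.1 l hl, hy.1 l hl], hx.2.add hy.2⟩

theorem SC_add_subset_of_prefixSum_eq_zero (hm' : prefixSum m' n = 0) :
    SC n (m + m') ⊆ SC n m := by
  intro c hc
  rw [mem_SC_iff, prefixSum_add] at hc
  refine mem_SC_iff.2 ⟨hc.1, hc.2.congr (fun t ht => ?_) fun _ _ => rfl⟩
  have hm't : prefixSum m' t = 0 := Nat.eq_zero_of_le_zero (hm' ▸ monotone_prefixSum m' ht)
  rw [Pi.add_apply, hm't, add_zero]

theorem mem_SC_add_SC_of_le {d : ℕ → ℕ} (hdc : d ≤ c)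
    (hc : ∀ l, (l = 0 ∨ 2 * n - 1 < l) → c l = 0)
    (hd : PathIneq n (prefixSum m) (prefixSum d) (d (2 * n - 1)))
    (hsub : PathIneq n (prefixSum m') (prefixSum (c - d)) (c (2 * n - 1) - d (2 * n - 1))) :
    c ∈ SC n m + SC n m' := by
  refine ⟨d, mem_SC_iff.2 ⟨fun l hl => ?_, hd⟩, c - d, mem_SC_iff.2 ⟨fun l hl => ?_, hsub⟩,
    add_tsub_cancel_of_le hdc⟩
  · exact Nat.eq_zero_of_le_zero (hc l hl ▸ hdc l)
  · rw [Pi.sub_apply, hc l hl, Nat.zero_sub]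

section Peel

variable {i : ℕ} (hi : 1 ≤ i) (hin : i ≤ n) (hM : ∀ t < i, prefixSum m t = 0)
include hi hin hM

theorem mem_SC_single_add_SC_of_dyck (hc : c ∈ SC n (Pi.single i 1 + m))
    (hz : c (2 * n - 1) ≠ 0) (hdyck : ∀ k < n, prefixSum c k ≤ prefixSum m k) :
    c ∈ SC n (Pi.single i 1) + SC n m := by
  rw [mem_SC_iff, prefixSum_add, prefixSum_single hi] at hc
  obtain ⟨hsupp, hineq⟩ := hc
  have hle : Pi.single (2 * n - 1) 1 ≤ c := single_one_le hz
  have hsingle : ∀ t < 2 * n - 1, prefixSum (Pi.single (2 * n - 1) 1) t = 0 := fun t ht => by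
    rw [prefixSum_single (by omega), unitStep, if_neg ht.not_ge]
  refine mem_SC_add_SC_of_le hle hsupp ?_ ?_
  · rw [Pi.single_eq_same, prefixSum_single hi]
    exact (PathIneq.unitStep_zero_one hin).congr (fun _ _ => rfl) fun t ht => (hsingle t ht).symm
  · rw [← Nat.sub_one_add_one hz] at hineq
    rw [Pi.single_eq_same]
    refine (hineq.of_unitStep_add_of_dyck hin hM hdyck).congr (fun _ _ => rfl) fun t ht => ?_
    rw [prefixSum_sub hle, hsingle t ht, Nat.sub_zero]

theorem mem_SC_single_add_SC_of_tight (hc : c ∈ SC n (Pi.single i 1 + m))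
    (htight : c (2 * n - 1) = 0 ∨ ∃ k, i ≤ k ∧ k < n ∧ prefixSum c k = prefixSum m k + 1) :
    c ∈ SC n (Pi.single i 1) + SC n m := by
  rw [mem_SC_iff, prefixSum_add, prefixSum_single hi] at hc
  obtain ⟨hsupp, hineq⟩ := hc
  have hC := monotone_prefixSum c
  obtain ⟨d, hdc, hd_zero, hd⟩ := exists_le_prefixSum_eq_comp
    (twoStep_zero (prefixSum c (2 * n - 1 - i))) (monotone_twoStep _) (twoStep_add_le _)
    c (2 * n - 1)
  refine mem_SC_add_SC_of_le hdc hsupp ?_ ?_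
  · rw [hd_zero _ le_rfl, prefixSum_single hi]
    exact (hineq.unitStep_twoStep hin hM hC).congr (fun _ _ => rfl) fun t ht => (hd t ht).symm
  · rw [hd_zero _ le_rfl, Nat.sub_zero]
    refine (hineq.sub_twoStep hin hM (monotone_prefixSum m) hC htight).congr
      (fun _ _ => rfl) fun t ht => ?_
    rw [prefixSum_sub hdc, hd t ht]

theorem SC_single_add_subset : SC n (Pi.single i 1 + m) ⊆ SC n (Pi.single i 1) + SC n m := by
  intro c hc
  by_cases hcase : c (2 * n - 1) ≠ 0 ∧ ∀ k < n, prefixSum c k ≤ prefixSum m k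
  · exact mem_SC_single_add_SC_of_dyck hi hin hM hc hcase.1 hcase.2
  · refine mem_SC_single_add_SC_of_tight hi hin hM hc ?_
    rw [not_and_or, not_not] at hcase
    refine hcase.imp_right fun hviolated => ?_
    push Not at hviolated
    obtain ⟨k, hk, hlt⟩ := hviolated
    rw [mem_SC_iff, prefixSum_add, prefixSum_single hi] at hc
    have hdyck := hc.2.dyck k hk
    simp only [Pi.add_apply, unitStep] at hdyck
    split_ifs at hdyck with hik <;> [exact ⟨k, hik, hk, by omega⟩; omega]

end Peel

theorem SC_add_subset (n : ℕ) (m m' : ℕ → ℕ) : SC n (m + m') ⊆ SC n m + SC n m' := by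
  induction hN : prefixSum (m + m') n using Nat.strong_induction_on generalizing m m' with
  | _ N ih =>
  rcases eq_or_ne (prefixSum (m + m') n) 0 with hzero | hne
  · rw [prefixSum_add, Pi.add_apply, add_eq_zero] at hzero
    exact (SC_add_subset_of_prefixSum_eq_zero hzero.2).trans
      (Set.subset_add_left _ (zero_mem_SC n m'))
  obtain ⟨i, hi, hin, hmi, hlow⟩ := exists_first_ne_zero hne
  clear hne
  wlog hi_m : m i ≠ 0 generalizing m m'
  · rw [add_comm m] at hN hmi hlow ⊢
    rw [add_comm (SC n m)]
    rw [not_not] at hi_m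
    exact this m' m hN hmi hlow (by simpa [hi_m] using hmi)
  obtain ⟨m₀, rfl⟩ := exists_add_of_le (single_one_le hi_m)
  rw [add_assoc, prefixSum_add, prefixSum_single hi] at hN hlow
  rw [add_assoc]
  have hlt : prefixSum (m₀ + m') n < N := by
    rw [← hN, Pi.add_apply, unitStep, if_pos hin]
    omega
  have hlow₀ : ∀ t < i, prefixSum (m₀ + m') t = 0 := fun t ht => (add_eq_zero.1 (hlow t ht)).2
  calc SC n (Pi.single i 1 + (m₀ + m'))
      ⊆ SC n (Pi.single i 1) + SC n (m₀ + m') := SC_single_add_subset hi hin hlow₀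
    _ ⊆ SC n (Pi.single i 1) + (SC n m₀ + SC n m') :=
        Set.add_subset_add_left (ih _ hlt m₀ m' rfl)
    _ = (SC n (Pi.single i 1) + SC n m₀) + SC n m' := (add_assoc _ _ _).symm
    _ ⊆ SC n (Pi.single i 1 + m₀) + SC n m' :=
        Set.add_subset_add_right (SC_add_SC_subset n _ m₀)

end SC

/-- Minkowski sum property `S_C(m + m') = S_C(m) + S_C(m')` (type `C` case of the paper's
Lemma `S_w(λ) + S_w(μ) = S_w(λ + μ)`). -/
theorem SC_add_eq_minkowski (n : ℕ) (hn : 2 ≤ n) (m m' : ℕ → ℕ) :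
    SC n (m + m') = SC n m + SC n m' :=
  (SC_add_subset n m m').antisymm (SC_add_SC_subset n m m')
end

section
/- For every m ∈ ℕ^n, every x ∈ S_A(m) and every index 1 ≤ i ≤ n with m_i ≥ 1, there exists y ∈ S_A(e_i), where e_i ∈ ℕ^n is the i-th standard unit vector, such that y ≤ x componentwise and x − y ∈ S_A(m − e_i). (This is the type-A case of the paper's decomposition Proposition and its Corollary: any point of S_w(λ) can be reduced by a point of S_w(ω_i) to a point of S_w(λ − ω_i).) -/
/-!
The inequalities defining `S_A(m)` only involve the slacks `f r = ∑_{l ≤ r} (m_l - a_l)` and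
`g k = ∑_{l > k} (m_l - b_l)`: (A1) and (A2) say that `f` and `g` are nonnegative, (A3) and (A4)
together say that `a_n ≤ f r + g k` whenever `1 ≤ k ≤ r < n`.

Let `p ≥ i` be the first index below `n` with `a_p ≠ 0` (or `n`), and `q ≤ i` the last index above
`1` with `b_q ≠ 0` (or `1`). Subtracting `e_i` from `m`, `e_p` from `a` (if `p < n`) and `e_q` from
`b` (if `q > 1`) lowers `f` by one on `[i, p)` and `g` by one on `[q, i)`. As `a` vanishes on
`[i, p)` and `b` on `(q, i]`, both slacks stay nonnegative, and the remaining inequalities can fail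
only if `f t + g t = a_n` for some `t ∈ [q, p)`. Such a tight `t` forces enough slack at all the
other indices to lower only `a_n` by one instead, which lowers `f` on `[i, n)` and `g` on `[1, i)`.
-/

open Finset
open scoped Pointwise

/-- The `i`-th standard unit vector (1-based coordinates, as a function `ℕ → ℕ`). -/
def unitVec (i : ℕ) : ℕ → ℕ := fun l => if l = i then 1 else 0

theorem exists_first_or_eq {α : Type*} [LinearOrder α] [LocallyFiniteOrder α] {i n : α}
    (hin : i ≤ n) (P : α → Prop) :
    ∃ p, i ≤ p ∧ p ≤ n ∧ (p ≠ n → P p) ∧ ∀ l, i ≤ l → l < p → ¬P l := by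
  classical
  let s := {l ∈ Icc i n | l ≠ n → P l}
  have hs : s.Nonempty := ⟨n, by simp [s, hin]⟩
  obtain ⟨hp, hPp⟩ := mem_filter.mp (s.min'_mem hs)
  obtain ⟨hip, hpn⟩ := mem_Icc.mp hp
  refine ⟨s.min' hs, hip, hpn, hPp, fun l hil hlp hPl => hlp.not_ge ?_⟩
  exact s.min'_le l (mem_filter.mpr ⟨mem_Icc.mpr ⟨hil, hlp.le.trans hpn⟩, fun _ => hPl⟩)

theorem exists_last_or_eq {α : Type*} [LinearOrder α] [LocallyFiniteOrder α] {j i : α}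
    (hji : j ≤ i) (P : α → Prop) :
    ∃ q, j ≤ q ∧ q ≤ i ∧ (q ≠ j → P q) ∧ ∀ l, q < l → l ≤ i → ¬P l := by
  obtain ⟨q, hqi, hjq, hq, hlast⟩ :=
    exists_first_or_eq (α := αᵒᵈ) (i := OrderDual.toDual i) (n := OrderDual.toDual j) hji P
  exact ⟨q, hjq, hqi, hq, fun l hql hli => hlast l hli hql⟩

/-- The signed amount by which `m` exceeds `a` on the indices `k + 1, …, r`. -/
def slack (m a : ℕ → ℕ) (k r : ℕ) : ℤ := ∑ l ∈ Ioc k r, ((m l : ℤ) - a l)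

section Slack

variable {m m' a a' : ℕ → ℕ} {i k n p q r s : ℕ}

theorem slack_eq_sum_sub_sum : slack m a k r = ∑ l ∈ Ioc k r, m l - ∑ l ∈ Ioc k r, a l := by
  simp [slack]

theorem slack_self : slack m a k k = 0 := by simp [slack]

theorem slack_nonneg_iff :
    0 ≤ slack m a k r ↔ ∑ l ∈ Icc (k + 1) r, a l ≤ ∑ l ∈ Icc (k + 1) r, m l := by
  rw [slack_eq_sum_sub_sum, Icc_add_one_left_eq_Ioc]
  omega

theorem le_slack_add_slack_iff (hkr : k ≤ r) (hrn : r ≤ n) (c : ℕ) :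
    (c : ℤ) ≤ slack m a 0 r + slack m a' k n ↔
      ∑ l ∈ Icc 1 r, a l + c + ∑ l ∈ Icc (k + 1) n, a' l ≤
        ∑ l ∈ Icc 1 n, m l + ∑ l ∈ Icc (k + 1) r, m l := by
  have hr := sum_Ioc_consecutive m k.zero_le hkr
  have hn := sum_Ioc_consecutive m k.zero_le (hkr.trans hrn)
  have hIcc (s : ℕ) : Icc 1 s = Ioc 0 s := Icc_add_one_left_eq_Ioc 0 s
  simp only [slack_eq_sum_sub_sum, Icc_add_one_left_eq_Ioc, hIcc]
  omega

theorem slack_add_slack (hks : k ≤ s) (hsr : s ≤ r) :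
    slack m a k s + slack m a s r = slack m a k r :=
  sum_Ioc_consecutive _ hks hsr

theorem slack_sub_sub (hm : m' ≤ m) (ha : a' ≤ a) :
    slack (m - m') (a - a') k r = slack m a k r - slack m' a' k r := by
  simp only [slack, ← sum_sub_distrib, Pi.sub_apply, Nat.cast_sub (hm _), Nat.cast_sub (ha _)]
  exact sum_congr rfl fun _ _ => by ring

theorem slack_update_of_notMem (hs : s ∉ Ioc k r) (c : ℕ) :
    slack m (Function.update a s c) k r = slack m a k r :=
  sum_congr rfl fun l hl => by rw [Function.update_of_ne (ne_of_mem_of_not_mem hl hs)]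

theorem slack_nonneg (h : ∀ l ∈ Ioc k r, a l ≤ m l) : 0 ≤ slack m a k r :=
  sum_nonneg fun l hl => by simpa using h l hl

theorem slack_pos (h : ∀ l ∈ Ioc k r, a l ≤ m l) (hs : s ∈ Ioc k r) (hlt : a s < m s) :
    0 < slack m a k r :=
  sum_pos' (fun l hl => by simpa using h l hl) ⟨s, hs, by simpa using hlt⟩

theorem monotoneOn_slack_right (hsi : s ≤ i) (h : ∀ l, i ≤ l → l < p → a l ≤ m l) :
    MonotoneOn (slack m a s) (Set.Ico i p) := by
  intro k hk r hr hkr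
  rw [← slack_add_slack (hsi.trans hk.1) hkr]
  refine le_add_of_nonneg_right (slack_nonneg fun l hl => ?_)
  rw [mem_Ioc] at hl
  exact h l (hk.1.trans hl.1.le) (hl.2.trans_lt hr.2)

theorem antitoneOn_slack_left (hin : i ≤ n) (h : ∀ l, q < l → l ≤ i → a l ≤ m l) :
    AntitoneOn (slack m a · n) (Set.Ico q i) := by
  intro k hk r hr hkr
  simp only [← slack_add_slack hkr (hr.2.le.trans hin)]
  refine le_add_of_nonneg_left (slack_nonneg fun l hl => ?_)
  rw [mem_Ioc] at hl
  exact h l (hk.1.trans_lt hl.1) (hl.2.trans hr.2.le)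

theorem slack_lt_slack_right (hsk : s ≤ k) (hki : k < i) (hir : i ≤ r)
    (h : ∀ l, k < l → l ≤ r → a l ≤ m l) (hlt : a i < m i) : slack m a s k < slack m a s r := by
  rw [← slack_add_slack hsk (hki.le.trans hir)]
  exact lt_add_of_pos_right _ <|
    slack_pos (fun l hl => h l (mem_Ioc.mp hl).1 (mem_Ioc.mp hl).2) (mem_Ioc.mpr ⟨hki, hir⟩) hlt

theorem slack_lt_slack_left (hki : k < i) (hin : i ≤ n)
    (h : ∀ l, k < l → l ≤ i → a l ≤ m l) (hlt : a i < m i) : slack m a i n < slack m a k n := by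
  rw [← slack_add_slack hki.le hin]
  exact lt_add_of_pos_left _ <|
    slack_pos (fun l hl => h l (mem_Ioc.mp hl).1 (mem_Ioc.mp hl).2) (right_mem_Ioc.mpr hki) hlt

theorem slack_unitVec_unitVec_right (hi : 1 ≤ i) (hip : i ≤ p) :
    slack (unitVec i) (unitVec p) 0 r = (Set.Ico i p).indicator 1 r := by
  simp only [slack_eq_sum_sub_sum, unitVec, sum_ite_eq', mem_Ioc, Set.indicator_apply, Set.mem_Ico,
    Pi.one_apply]
  split_ifs <;> omega

theorem slack_unitVec_unitVec_left (hqi : q ≤ i) (hin : i ≤ n) :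
    slack (unitVec i) (unitVec q) k n = (Set.Ico q i).indicator 1 k := by
  simp only [slack_eq_sum_sub_sum, unitVec, sum_ite_eq', mem_Ioc, Set.indicator_apply, Set.mem_Ico,
    Pi.one_apply]
  split_ifs <;> omega

end Slack

/-- The defining inequalities of `S_A(m)` in terms of slacks: for a point `(a, b)`, take
`c = a_n`, `f r = slack m a 0 r` and `g k = slack m b k n`. The conditions at the extreme indices
`f 0` and `g n`, which vanish for such a point, make the definition self-dual under `r ↦ n - r`. -/
structure AdmissibleSlacks (n : ℕ) (c : ℤ) (f g : ℕ → ℤ) : Prop where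
  left_nonneg : ∀ r, r < n → 0 ≤ f r
  right_nonneg : ∀ k, 0 < k → k ≤ n → 0 ≤ g k
  le_add : ∀ k r, 0 < k → k ≤ r → r < n → c ≤ f r + g k

namespace AdmissibleSlacks

variable {n i p q t : ℕ} {c : ℤ} {f f' g g' : ℕ → ℤ}

theorem congr (h : AdmissibleSlacks n c f g) (hf : ∀ r < n, f r = f' r)
    (hg : ∀ k, 0 < k → g k = g' k) : AdmissibleSlacks n c f' g' where
  left_nonneg r hr := hf r hr ▸ h.left_nonneg r hr
  right_nonneg k hk hkn := hg k hk ▸ h.right_nonneg k hk hkn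
  le_add k r hk hkr hr := hf r hr ▸ hg k hk ▸ h.le_add k r hk hkr hr

theorem zero_indicator_Ico :
    AdmissibleSlacks n 0 ((Set.Ico i p).indicator 1) ((Set.Ico q i).indicator 1) := by
  have hnonneg (s : Set ℕ) (l : ℕ) : (0 : ℤ) ≤ s.indicator 1 l :=
    Set.indicator_apply_nonneg fun _ => zero_le_one
  exact ⟨fun _ _ => hnonneg _ _, fun _ _ _ => hnonneg _ _,
    fun _ _ _ _ _ => add_nonneg (hnonneg _ _) (hnonneg _ _)⟩

theorem one_indicator_Ico :
    AdmissibleSlacks n 1 ((Set.Ico i n).indicator 1) ((Set.Ico 1 i).indicator 1) where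
  left_nonneg := (zero_indicator_Ico (q := 1)).left_nonneg
  right_nonneg := (zero_indicator_Ico (p := n)).right_nonneg
  le_add k r hk hkr hr := by
    simp only [Set.indicator_apply, Set.mem_Ico, Pi.one_apply]
    split_ifs <;> omega

theorem sub_indicator_Ico (h : AdmissibleSlacks n c f g) (hi : 1 ≤ i) (hqi : q ≤ i)
    (hip : i ≤ p) (hin : i ≤ n) (hf_mono : MonotoneOn f (Set.Ico i p))
    (hf_lt : ∀ r, i ≤ r → r < p → f (i - 1) < f r)
    (hg_anti : AntitoneOn g (Set.Ico q i)) (hg_lt : ∀ k, q ≤ k → k < i → g i < g k)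
    (hloose : ∀ t, q ≤ t → t < p → c < f t + g t) :
    AdmissibleSlacks n c (f - (Set.Ico i p).indicator 1) (g - (Set.Ico q i).indicator 1) where
  left_nonneg r hr := by
    have := h.left_nonneg r hr
    have := h.left_nonneg (i - 1) (by omega)
    have := hf_lt r
    simp only [Pi.sub_apply, Set.indicator_apply, Set.mem_Ico, Pi.one_apply]
    split_ifs <;> omega
  right_nonneg k hk hkn := by
    have := h.right_nonneg k hk hkn
    have := h.right_nonneg i hi hin
    have := hg_lt k
    simp only [Pi.sub_apply, Set.indicator_apply, Set.mem_Ico, Pi.one_apply]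
    split_ifs <;> omega
  le_add k r hk hkr hr := by
    have hkr_le := h.le_add k r hk hkr hr
    simp only [Pi.sub_apply, Set.indicator_apply, Set.mem_Ico, Pi.one_apply]
    split_ifs with hrp hqk hqk
    · have hfr : f i ≤ f r := hf_mono ⟨le_rfl, by omega⟩ hrp hrp.1
      have hgk := hg_lt k hqk.1 hqk.2
      have hloose_i := hloose i (by omega) (by omega)
      omega
    · by_cases hki : k < i
      · have hfr := hf_lt r hrp.1 hrp.2
        have hle := h.le_add k (i - 1) hk (by omega) (by omega)
        omega
      · have hfr : f k ≤ f r := hf_mono ⟨by omega, by omega⟩ hrp hkr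
        have hloose_k := hloose k (by omega) (by omega)
        omega
    · by_cases hir : i ≤ r
      · have hgk := hg_lt k hqk.1 hqk.2
        have hle := h.le_add i r hi hir hr
        omega
      · have hgk : g r ≤ g k := hg_anti hqk ⟨by omega, by omega⟩ hkr
        have hloose_r := hloose r (by omega) (by omega)
        omega
    · omega

theorem sub_one_sub_indicator_Ico (h : AdmissibleSlacks n c f g)
    (hf_pos : ∀ r, i ≤ r → r < n → 0 < f r) (hg_pos : ∀ k, 0 < k → k < i → 0 < g k)
    (hlt_add : ∀ k r, 0 < k → k < i → i ≤ r → r < n → c < f r + g k) :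
    AdmissibleSlacks n (c - 1)
      (f - (Set.Ico i n).indicator 1) (g - (Set.Ico 1 i).indicator 1) where
  left_nonneg r hr := by
    have := h.left_nonneg r hr
    have := hf_pos r
    simp only [Pi.sub_apply, Set.indicator_apply, Set.mem_Ico, Pi.one_apply]
    split_ifs <;> omega
  right_nonneg k hk hkn := by
    have := h.right_nonneg k hk hkn
    have := hg_pos k
    simp only [Pi.sub_apply, Set.indicator_apply, Set.mem_Ico, Pi.one_apply]
    split_ifs <;> omega
  le_add k r hk hkr hr := by
    have := h.le_add k r hk hkr hr
    have := hlt_add k r hk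
    simp only [Pi.sub_apply, Set.indicator_apply, Set.mem_Ico, Pi.one_apply]
    split_ifs <;> omega

theorem sub_one_of_tight_ge (h : AdmissibleSlacks n c f g) (hi : 1 ≤ i) (hit : i ≤ t) (htn : t < n)
    (htight : f t + g t ≤ c) (hf_lt : ∀ r, i ≤ r → r ≤ t → f (i - 1) < f r) :
    0 < c ∧ AdmissibleSlacks n (c - 1)
      (f - (Set.Ico i n).indicator 1) (g - (Set.Ico 1 i).indicator 1) := by
  have hf0 := h.left_nonneg (i - 1) (by omega)
  have hgt := h.right_nonneg t (by omega) htn.le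
  have hft := hf_lt t hit le_rfl
  have hf_lt' : ∀ r, i ≤ r → r < n → f (i - 1) < f r := fun r hir hr => by
    rcases le_total r t with hrt | htr
    · exact hf_lt r hir hrt
    · have hle := h.le_add t r (by omega) htr hr
      omega
  refine ⟨by omega, h.sub_one_sub_indicator_Ico (fun r hir hr => hf0.trans_lt (hf_lt' r hir hr))
    (fun k hk hki => ?_) fun k r hk hki hir hr => ?_⟩
  · have hle := h.le_add k (i - 1) hk (by omega) (by omega)
    omega
  · have hfr := hf_lt' r hir hr
    have hle := h.le_add k (i - 1) hk (by omega) (by omega)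
    omega

theorem sub_one_of_tight_lt (h : AdmissibleSlacks n c f g) (hin : i ≤ n) (ht : 0 < t) (hti : t < i)
    (htight : f t + g t ≤ c) (hg_lt : ∀ k, t ≤ k → k < i → g i < g k) :
    0 < c ∧ AdmissibleSlacks n (c - 1)
      (f - (Set.Ico i n).indicator 1) (g - (Set.Ico 1 i).indicator 1) := by
  have hg0 := h.right_nonneg i (by omega) hin
  have hft := h.left_nonneg t (by omega)
  have hgt := hg_lt t le_rfl hti
  have hg_lt' : ∀ k, 0 < k → k < i → g i < g k := fun k hk hki => by
    rcases le_total t k with htk | hkt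
    · exact hg_lt k htk hki
    · have hle := h.le_add k t hk hkt (by omega)
      omega
  refine ⟨by omega, h.sub_one_sub_indicator_Ico (fun r hir hr => ?_)
    (fun k hk hki => hg0.trans_lt (hg_lt' k hk hki)) fun k r hk hki hir hr => ?_⟩
  · have hle := h.le_add i r (by omega) hir hr
    omega
  · have hgk := hg_lt' k hk hki
    have hle := h.le_add i r (by omega) hir hr
    omega

theorem sub_indicator_Ico_or_sub_one (h : AdmissibleSlacks n c f g) (hq : 1 ≤ q) (hqi : q ≤ i)
    (hip : i ≤ p) (hpn : p ≤ n)
    (hf_mono : MonotoneOn f (Set.Ico i p)) (hf_lt : ∀ r, i ≤ r → r < p → f (i - 1) < f r)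
    (hg_anti : AntitoneOn g (Set.Ico q i)) (hg_lt : ∀ k, q ≤ k → k < i → g i < g k) :
    AdmissibleSlacks n c (f - (Set.Ico i p).indicator 1) (g - (Set.Ico q i).indicator 1) ∨
      0 < c ∧ AdmissibleSlacks n (c - 1)
        (f - (Set.Ico i n).indicator 1) (g - (Set.Ico 1 i).indicator 1) := by
  have hin := hip.trans hpn
  by_cases hloose : ∀ t, q ≤ t → t < p → c < f t + g t
  · exact .inl (h.sub_indicator_Ico (hq.trans hqi) hqi hip hin hf_mono hf_lt hg_anti hg_lt hloose)
  push Not at hloose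
  obtain ⟨t, hqt, htp, htight⟩ := hloose
  rcases lt_or_ge t i with hti | hit
  · exact .inr (h.sub_one_of_tight_lt hin (by omega) hti htight
      fun k htk => hg_lt k (hqt.trans htk))
  · exact .inr (h.sub_one_of_tight_ge (hq.trans hqi) hit (htp.trans_le hpn) htight
      fun r hir hrt => hf_lt r hir (hrt.trans_lt htp))

theorem slack_sub_indicator_Ico_or_sub_one {m a b : ℕ → ℕ}
    (h : AdmissibleSlacks n c (slack m a 0) (slack m b · n)) (hmi : 1 ≤ m i)
    (hq : 1 ≤ q) (hqi : q ≤ i) (hip : i ≤ p) (hpn : p ≤ n)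
    (ha : ∀ l, i ≤ l → l < p → a l = 0) (hb : ∀ l, q < l → l ≤ i → b l = 0) :
    AdmissibleSlacks n c (slack m a 0 - (Set.Ico i p).indicator 1)
        ((slack m b · n) - (Set.Ico q i).indicator 1) ∨
      0 < c ∧ AdmissibleSlacks n (c - 1) (slack m a 0 - (Set.Ico i n).indicator 1)
        ((slack m b · n) - (Set.Ico 1 i).indicator 1) := by
  have ha_le (l : ℕ) (hil : i ≤ l) (hlp : l < p) : a l ≤ m l := by simp [ha l hil hlp]
  have hb_le (l : ℕ) (hql : q < l) (hli : l ≤ i) : b l ≤ m l := by simp [hb l hql hli]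
  have hin := hip.trans hpn
  refine h.sub_indicator_Ico_or_sub_one hq hqi hip hpn
    (monotoneOn_slack_right i.zero_le ha_le) (fun r hir hrp => ?_)
    (antitoneOn_slack_left hin hb_le) (fun k hqk hki => ?_)
  · refine slack_lt_slack_right (i - 1).zero_le (by omega) hir
      (fun l hil hlr => ha_le l (by omega) (hlr.trans_lt hrp)) ?_
    rwa [ha i le_rfl (hir.trans_lt hrp)]
  · refine slack_lt_slack_left hki hin (fun l hkl hli => hb_le l (hqk.trans_lt hkl) hli) ?_
    rwa [hb i (hqk.trans_lt hki) le_rfl]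

end AdmissibleSlacks

theorem mem_SA_iff {n : ℕ} {m : ℕ → ℕ} {x : (ℕ → ℕ) × (ℕ → ℕ)} :
    x ∈ SA n m ↔ (∀ l, (l = 0 ∨ n < l) → x.1 l = 0) ∧ (∀ l, (l ≤ 1 ∨ n < l) → x.2 l = 0) ∧
      AdmissibleSlacks n (x.1 n) (slack m x.1 0) (slack m x.2 · n) := by
  refine and_congr_right fun _ => and_congr_right fun _ => ⟨?_, fun h => ⟨?_, ?_, ?_, ?_⟩⟩
  · rintro ⟨hA1, hA2, hA3, hA4⟩
    refine ⟨fun r hr => ?_, fun k hk hkn => ?_, fun k r hk hkr hr => ?_⟩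
    · rcases r.eq_zero_or_pos with rfl | hr0
      · exact slack_self.ge
      · exact slack_nonneg_iff.mpr (hA1 r hr0 hr)
    · rcases hkn.eq_or_lt with rfl | hkn
      · exact slack_self.ge
      · exact slack_nonneg_iff.mpr (hA2 (k + 1) (by omega) hkn)
    · rw [le_slack_add_slack_iff hkr hr.le]
      rcases hkr.eq_or_lt with rfl | hkr
      · simpa using hA3 k hk hr
      · exact hA4 (k + 1) r (by omega) (by omega) hkr hr
  · exact fun j _ hjn => slack_nonneg_iff.mp (h.left_nonneg j hjn)
  · intro i hi hin
    obtain ⟨k, rfl⟩ := Nat.exists_eq_add_of_le' (one_le_two.trans hi)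
    exact slack_nonneg_iff.mp (h.right_nonneg k (by omega) (by omega))
  · intro t ht htn
    simpa using (le_slack_add_slack_iff le_rfl htn.le _).mp (h.le_add t t ht le_rfl htn)
  · intro i r hi _ hir hr
    obtain ⟨k, rfl⟩ := Nat.exists_eq_add_of_le' (one_le_two.trans hi)
    exact (le_slack_add_slack_iff (by omega) hr.le _).mp (h.le_add k r (by omega) (by omega) hr)

theorem unitVec_apply_le {a : ℕ → ℕ} {i l : ℕ} (h : l = i → a l ≠ 0) : unitVec i l ≤ a l := by
  rw [unitVec]
  split_ifs with hl
  · exact Nat.one_le_iff_ne_zero.mpr (h hl)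
  · exact Nat.zero_le _

/-- The candidates for the point `y ∈ S_A(e_i)`: the unit vectors `(e_p, e_q)` with `a_n` set to
`c` and with the coordinate `b_1`, which does not exist, set to zero. -/
def reducingPoint (n p q c : ℕ) : (ℕ → ℕ) × (ℕ → ℕ) :=
  (Function.update (unitVec p) n c, Function.update (unitVec q) 1 0)

section ReducingPoint

variable {n p q c i : ℕ} {m : ℕ → ℕ} {x : (ℕ → ℕ) × (ℕ → ℕ)}

theorem reducingPoint_fst_self : (reducingPoint n p q c).1 n = c := Function.update_self ..

theorem slack_reducingPoint_fst {r : ℕ} (hi : 1 ≤ i) (hip : i ≤ p) (hr : r < n) :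
    slack (unitVec i) (reducingPoint n p q c).1 0 r = (Set.Ico i p).indicator 1 r := by
  rw [reducingPoint, slack_update_of_notMem (by simp [hr]), slack_unitVec_unitVec_right hi hip]

theorem slack_reducingPoint_snd {k : ℕ} (hqi : q ≤ i) (hin : i ≤ n) (hk : 0 < k) :
    slack (unitVec i) (reducingPoint n p q c).2 k n = (Set.Ico q i).indicator 1 k := by
  rw [reducingPoint, slack_update_of_notMem (by simp only [mem_Ioc]; omega),
    slack_unitVec_unitVec_left hqi hin]

theorem reducingPoint_le (hp : p ≠ n → x.1 p ≠ 0) (hq : q ≠ 1 → x.2 q ≠ 0) (hc : c ≤ x.1 n) :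
    reducingPoint n p q c ≤ x := by
  refine ⟨update_le_iff.mpr ⟨hc, fun l hl => unitVec_apply_le ?_⟩,
    update_le_iff.mpr ⟨Nat.zero_le _, fun l hl => unitVec_apply_le ?_⟩⟩
  · rintro rfl
    exact hp hl
  · rintro rfl
    exact hq hl

theorem reducingPoint_mem_SA (hq : 1 ≤ q) (hqi : q ≤ i) (hip : i ≤ p) (hpn : p ≤ n)
    (h : AdmissibleSlacks n c ((Set.Ico i p).indicator 1) ((Set.Ico q i).indicator 1)) :
    reducingPoint n p q c ∈ SA n (unitVec i) := by
  refine mem_SA_iff.mpr ⟨fun l hl => ?_, fun l hl => ?_, ?_⟩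
  · simp only [reducingPoint, Function.update_apply, unitVec]
    split_ifs <;> omega
  · simp only [reducingPoint, Function.update_apply, unitVec]
    split_ifs <;> omega
  · rw [reducingPoint_fst_self]
    exact h.congr (fun r hr => (slack_reducingPoint_fst (hq.trans hqi) hip hr).symm)
      fun k hk => (slack_reducingPoint_snd hqi (hip.trans hpn) hk).symm

theorem sub_reducingPoint_mem_SA (hx : x ∈ SA n m) (hm : unitVec i ≤ m) (hi : 1 ≤ i) (hqi : q ≤ i)
    (hip : i ≤ p) (hin : i ≤ n) (hle : reducingPoint n p q c ≤ x)
    (h : AdmissibleSlacks n (x.1 n - c) (slack m x.1 0 - (Set.Ico i p).indicator 1)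
      ((slack m x.2 · n) - (Set.Ico q i).indicator 1)) :
    x - reducingPoint n p q c ∈ SA n (m - unitVec i) := by
  obtain ⟨hx1, hx2, -⟩ := mem_SA_iff.mp hx
  refine mem_SA_iff.mpr ⟨fun l hl => ?_, fun l hl => ?_, ?_⟩
  · simp [hx1 l hl]
  · simp [hx2 l hl]
  · have hn : ((x - reducingPoint n p q c).1 n : ℤ) = x.1 n - c := by
      rw [Prod.fst_sub, Pi.sub_apply, Nat.cast_sub (hle.1 n), reducingPoint_fst_self]
    rw [hn]
    refine h.congr (fun r hr => ?_) fun k hk => ?_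
    · rw [Prod.fst_sub, slack_sub_sub hm hle.1, slack_reducingPoint_fst hi hip hr, Pi.sub_apply]
    · rw [Prod.snd_sub, slack_sub_sub hm hle.2, slack_reducingPoint_snd hqi hin hk, Pi.sub_apply]

end ReducingPoint

/-- Decomposition property in type `A`: any point of `S_A(m)` with `m_i ≥ 1` can be reduced
by a point of `S_A(e_i)` to a point of `S_A(m - e_i)`. -/
theorem SA_decomposition (n : ℕ) (hn : 2 ≤ n) (m : ℕ → ℕ) (i : ℕ) (hi1 : 1 ≤ i) (hin : i ≤ n)
    (hmi : 1 ≤ m i) (x : (ℕ → ℕ) × (ℕ → ℕ)) (hx : x ∈ SA n m) :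
    ∃ y ∈ SA n (unitVec i), y ≤ x ∧ x - y ∈ SA n (m - unitVec i) := by
  obtain ⟨-, -, hadm⟩ := mem_SA_iff.mp hx
  obtain ⟨p, hip, hpn, hp, ha⟩ := exists_first_or_eq hin (x.1 · ≠ 0)
  obtain ⟨q, hq1, hqi, hq, hb⟩ := exists_last_or_eq hi1 (x.2 · ≠ 0)
  simp only [not_not] at ha hb
  have hm : unitVec i ≤ m := fun l => unitVec_apply_le (by rintro rfl; omega)
  rcases hadm.slack_sub_indicator_Ico_or_sub_one hmi hq1 hqi hip hpn ha hb with h | ⟨hpos, h⟩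
  · have hle : reducingPoint n p q 0 ≤ x := reducingPoint_le hp hq (Nat.zero_le _)
    exact ⟨_, reducingPoint_mem_SA hq1 hqi hip hpn .zero_indicator_Ico, hle,
      sub_reducingPoint_mem_SA hx hm hi1 hqi hip hin hle (by simpa using h)⟩
  · have hle : reducingPoint n n 1 1 ≤ x := reducingPoint_le (by simp) (by simp) (by omega)
    exact ⟨_, reducingPoint_mem_SA le_rfl hi1 hin le_rfl (mod_cast .one_indicator_Ico), hle,
      sub_reducingPoint_mem_SA hx hm hi1 hi1 hin hin hle (by simpa using h)⟩
end

section
/- For every m ∈ ℕ^n and every integer k ≥ 1, S_A(k·m) equals the k-fold Minkowski sum of S_A(m) with itself: every element of S_A(k·m) can be written as x_1 + ⋯ + x_k with all x_t ∈ S_A(m), and conversely every such sum lies in S_A(k·m). (This expresses the normality of the polytope P_w(λ), part (1) of the paper's Main Theorem, in type A.) -/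
open Finset
open scoped Pointwise

/-!
List the coordinates of a point in the order `b_2, …, b_n, a_n, a_1, …, a_{n-1}`. The left-hand side
of each of the inequalities (A1)–(A4) is then a sum of consecutive entries. With `C i` the sum of
the first `i` entries, an inequality for `k • m` reads `C j - C i ≤ k * w`, and hence
`⌊(C j + t) / k⌋ - ⌊(C i + t) / k⌋ ≤ w` for `0 ≤ t < k`. So for each of these `t` the increments of
`i ↦ ⌊(C i + t) / k⌋` satisfy the inequalities for `m`, and the `k` resulting sequences add up to
the given one because `∑ t < k, ⌊(y + t) / k⌋ = y` (Hermite's identity).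
-/

theorem sum_range_add_div {k : ℕ} (hk : 0 < k) (y : ℕ) : ∑ t ∈ range k, (y + t) / k = y := by
  induction y with
  | zero => exact sum_eq_zero fun t ht => by simpa using Nat.div_eq_of_lt (mem_range.mp ht)
  | succ y ih =>
    -- Passing to `y + 1` trades the summand `y / k` for `(y + k) / k = y / k + 1`.
    have head := sum_range_succ' (fun t => (y + t) / k) k
    have last := sum_range_succ (fun t => (y + t) / k) k
    rw [Nat.add_div_right y hk] at last
    simp only [add_right_comm y 1, add_zero, add_assoc y _ 1] at head ⊢
    lia

/-- The `t`-th of the `k` parts, `t < k`, into which a sequence `c` of natural numbers is split as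
evenly as possible: its sum over an interval differs by less than one from a `k`-th of the sum
of `c`. -/
def balancedPart (k : ℕ) (c : ℕ → ℕ) (t i : ℕ) : ℕ :=
  (∑ l ∈ range (i + 1), c l + t) / k - (∑ l ∈ range i, c l + t) / k

theorem monotone_sum_range_add_div (k : ℕ) (c : ℕ → ℕ) (t : ℕ) :
    Monotone fun i => (∑ l ∈ range i, c l + t) / k := fun _ _ h =>
  Nat.div_le_div_right <| Nat.add_le_add_right (sum_le_sum_of_subset (range_mono h)) t

theorem sum_Ico_balancedPart (k : ℕ) (c : ℕ → ℕ) (t : ℕ) {i j : ℕ} (hij : i ≤ j) :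
    ∑ l ∈ Ico i j, balancedPart k c t l =
      (∑ l ∈ range j, c l + t) / k - (∑ l ∈ range i, c l + t) / k :=
  sum_Ico_tsub (monotone_sum_range_add_div k c t) hij

theorem sum_Ico_balancedPart_le {k : ℕ} (hk : 0 < k) {c : ℕ → ℕ} (t : ℕ) {i j w : ℕ}
    (h : ∑ l ∈ Ico i j, c l ≤ k * w) : ∑ l ∈ Ico i j, balancedPart k c t l ≤ w := by
  obtain hji | hij := lt_or_ge j i
  · simp [Ico_eq_empty_of_le hji.le]
  rw [sum_Ico_balancedPart k c t hij, tsub_le_iff_left]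
  calc (∑ l ∈ range j, c l + t) / k
      = (∑ l ∈ range i, c l + ∑ l ∈ Ico i j, c l + t) / k := by rw [sum_range_add_sum_Ico c hij]
    _ ≤ (∑ l ∈ range i, c l + t + k * w) / k := Nat.div_le_div_right (by lia)
    _ = (∑ l ∈ range i, c l + t) / k + w := Nat.add_mul_div_left _ _ hk

theorem sum_balancedPart {k : ℕ} (hk : 0 < k) (c : ℕ → ℕ) :
    ∑ t : Fin k, balancedPart k c t = c := by
  ext i
  rw [Fin.sum_univ_eq_sum_range (balancedPart k c) k, Finset.sum_apply]
  simp only [balancedPart]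
  rw [sum_tsub_distrib _ fun t _ => monotone_sum_range_add_div k c t i.le_succ,
    sum_range_add_div hk, sum_range_add_div hk, sum_range_succ, Nat.add_sub_cancel_left]

/-- The pair `(a, b)` whose coordinates `b_2, …, b_n, a_n, a_1, …, a_{n-1}`, in this order, are the
entries `c 2, …, c (2 * n)`, all other coordinates being zero. The remainder `l % n` places `a_n`
before `a_1`. -/
def pairOfSeq (n : ℕ) : (ℕ → ℕ) →+ (ℕ → ℕ) × (ℕ → ℕ) where
  toFun c := (fun l => if l ∈ Icc 1 n then c (n + 1 + l % n) else 0,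
    fun l => if l ∈ Icc 2 n then c l else 0)
  map_zero' := by ext <;> simp
  map_add' c c' := by ext l <;> dsimp <;> split_ifs <;> rfl

section Coordinates

variable {n : ℕ} (c : ℕ → ℕ)

theorem pairOfSeq_fst_of_lt {l : ℕ} (h1l : 1 ≤ l) (hln : l < n) :
    (pairOfSeq n c).1 l = c (n + 1 + l) := by
  simp [pairOfSeq, h1l, hln.le, Nat.mod_eq_of_lt hln]

theorem pairOfSeq_fst_self (hn : 0 < n) : (pairOfSeq n c).1 n = c (n + 1) := by
  simp [pairOfSeq, Nat.one_le_iff_ne_zero, hn.ne']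

theorem sum_Icc_pairOfSeq_fst {j : ℕ} (hj : j < n) :
    ∑ l ∈ Icc 1 j, (pairOfSeq n c).1 l = ∑ l ∈ Ico (n + 2) (n + 2 + j), c l := by
  rw [sum_Ico_eq_sum_range, Nat.add_sub_cancel_left, ← Ico_add_one_right_eq_Icc,
    sum_Ico_eq_sum_range, Nat.add_sub_cancel]
  refine sum_congr rfl fun l hl => ?_
  rw [pairOfSeq_fst_of_lt c (Nat.le_add_right 1 l) (by grind), ← add_assoc]

theorem sum_Icc_pairOfSeq_snd {i : ℕ} (hi : 2 ≤ i) :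
    ∑ l ∈ Icc i n, (pairOfSeq n c).2 l = ∑ l ∈ Ico i (n + 1), c l := by
  rw [Ico_add_one_right_eq_Icc]
  refine sum_congr rfl fun l hl => if_pos ?_
  grind

theorem sum_Icc_pairOfSeq_fst_add_snd {i r : ℕ} (hi : 2 ≤ i) (hin : i ≤ n) (hr : r < n) :
    ∑ l ∈ Icc 1 r, (pairOfSeq n c).1 l + (pairOfSeq n c).1 n + ∑ l ∈ Icc i n, (pairOfSeq n c).2 l =
      ∑ l ∈ Ico i (n + 2 + r), c l := by
  rw [sum_Icc_pairOfSeq_fst c hr, pairOfSeq_fst_self c (by lia), sum_Icc_pairOfSeq_snd c hi,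
    ← sum_Ico_consecutive c (hin.trans (by lia)) (Nat.le_add_right (n + 2) r),
    sum_Ico_succ_top (hin.trans n.le_succ)]
  ring

end Coordinates

theorem exists_pairOfSeq_eq {n : ℕ} {z : (ℕ → ℕ) × (ℕ → ℕ)}
    (h₁ : ∀ l, l = 0 ∨ n < l → z.1 l = 0) (h₂ : ∀ l, l ≤ 1 ∨ n < l → z.2 l = 0) :
    ∃ c, pairOfSeq n c = z := by
  refine ⟨fun p => if p ≤ n then z.2 p else if p = n + 1 then z.1 n else z.1 (p - (n + 1)), ?_⟩
  ext l
  · obtain hl | hl | ⟨hn, rfl⟩ : (l = 0 ∨ n < l) ∨ (1 ≤ l ∧ l < n) ∨ (0 < n ∧ l = n) := by lia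
    · exact (if_neg (by grind)).trans (h₁ l hl).symm
    · grind [pairOfSeq_fst_of_lt]
    · simp [pairOfSeq_fst_self _ hn]
  · by_cases hl : l ∈ Icc 2 n
    · exact (if_pos hl).trans (if_pos (mem_Icc.mp hl).2)
    · exact (if_neg hl).trans (h₂ l (by grind)).symm

theorem pairOfSeq_mem_SA_of_smul {n k : ℕ} {m c c' : ℕ → ℕ}
    (hc' : ∀ i j w, ∑ l ∈ Ico i j, c l ≤ k * w → ∑ l ∈ Ico i j, c' l ≤ w)
    (hc : pairOfSeq n c ∈ SA n (k • m)) : pairOfSeq n c' ∈ SA n m := by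
  obtain ⟨-, -, hA1, hA2, hA3, hA4⟩ := hc
  simp only [Pi.smul_apply, smul_eq_mul, ← mul_sum, ← mul_add] at hA1 hA2 hA3 hA4
  refine ⟨fun l hl => if_neg (by grind), fun l hl => if_neg (by grind), fun j h1j hjn => ?_,
    fun i h2i hin => ?_, fun t h1t htn => ?_, fun i r h2i hin hir hrn => ?_⟩
  · rw [sum_Icc_pairOfSeq_fst c' hjn]
    exact hc' _ _ _ (sum_Icc_pairOfSeq_fst c hjn ▸ hA1 j h1j hjn)
  · rw [sum_Icc_pairOfSeq_snd c' h2i]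
    exact hc' _ _ _ (sum_Icc_pairOfSeq_snd c h2i ▸ hA2 i h2i hin)
  · have h2t : 2 ≤ t + 1 := Nat.succ_le_succ h1t
    rw [sum_Icc_pairOfSeq_fst_add_snd c' h2t htn htn]
    exact hc' _ _ _ (sum_Icc_pairOfSeq_fst_add_snd c h2t htn htn ▸ hA3 t h1t htn)
  · rw [sum_Icc_pairOfSeq_fst_add_snd c' h2i hin.le hrn]
    exact hc' _ _ _ (sum_Icc_pairOfSeq_fst_add_snd c h2i hin.le hrn ▸ hA4 i r h2i hin hir hrn)

theorem zero_mem_SA (n : ℕ) (m : ℕ → ℕ) : 0 ∈ SA n m := by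
  simp [SA]

theorem add_mem_SA {n : ℕ} {m m' : ℕ → ℕ} {x y : (ℕ → ℕ) × (ℕ → ℕ)}
    (hx : x ∈ SA n m) (hy : y ∈ SA n m') : x + y ∈ SA n (m + m') := by
  obtain ⟨hx₁, hx₂, hxA1, hxA2, hxA3, hxA4⟩ := hx
  obtain ⟨hy₁, hy₂, hyA1, hyA2, hyA3, hyA4⟩ := hy
  refine ⟨fun l hl => ?_, fun l hl => ?_, fun j h1j hjn => ?_,
    fun i h2i hin => ?_, fun t h1t htn => ?_, fun i r h2i hin hir hrn => ?_⟩ <;>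
    simp only [Prod.fst_add, Prod.snd_add, Pi.add_apply, sum_add_distrib]
  · rw [hx₁ l hl, hy₁ l hl]
  · rw [hx₂ l hl, hy₂ l hl]
  · exact add_le_add (hxA1 j h1j hjn) (hyA1 j h1j hjn)
  · exact add_le_add (hxA2 i h2i hin) (hyA2 i h2i hin)
  · linarith [hxA3 t h1t htn, hyA3 t h1t htn]
  · linarith [hxA4 i r h2i hin hir hrn, hyA4 i r h2i hin hir hrn]

theorem sum_mem_SA {ι : Type*} {n : ℕ} {s : Finset ι} {m : ι → ℕ → ℕ}
    {x : ι → (ℕ → ℕ) × (ℕ → ℕ)} (hx : ∀ t ∈ s, x t ∈ SA n (m t)) :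
    ∑ t ∈ s, x t ∈ SA n (∑ t ∈ s, m t) := by
  induction s using Finset.cons_induction with
  | empty => exact zero_mem_SA n _
  | cons t s ht ih =>
    rw [forall_mem_cons] at hx
    simpa only [sum_cons] using add_mem_SA hx.1 (ih hx.2)

/-- Normality of the polytope in type `A`: `S_A(k·m)` is the `k`-fold Minkowski sum of
`S_A(m)` with itself. -/
theorem SA_normal (n k : ℕ) (hn : 2 ≤ n) (hk : 1 ≤ k) (m : ℕ → ℕ)
    (z : (ℕ → ℕ) × (ℕ → ℕ)) :
    z ∈ SA n (k • m) ↔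
      ∃ x : Fin k → (ℕ → ℕ) × (ℕ → ℕ), (∀ t, x t ∈ SA n m) ∧ z = ∑ t, x t := by
  constructor
  · intro hz
    obtain ⟨c, rfl⟩ := exists_pairOfSeq_eq hz.1 hz.2.1
    refine ⟨fun t => pairOfSeq n (balancedPart k c t), fun t => ?_, ?_⟩
    · exact pairOfSeq_mem_SA_of_smul (fun _ _ _ => sum_Ico_balancedPart_le hk t) hz
    · rw [← map_sum, sum_balancedPart hk]
  · rintro ⟨x, hx, rfl⟩
    simpa using sum_mem_SA (s := univ) (m := fun _ => m) fun t _ => hx t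
end

section
/- For every m ∈ ℕ^n and every integer k ≥ 1, S_C(k·m) equals the k-fold Minkowski sum of S_C(m) with itself: every element of S_C(k·m) can be written as x_1 + ⋯ + x_k with all x_t ∈ S_C(m), and conversely every such sum lies in S_C(k·m). (This expresses the normality of the polytope P_w(λ), part (1) of the paper's Main Theorem, in type C.) -/
open Finset
open scoped Pointwise

/-! Encode a point `c` by its partial sums `P j = c_1 + ⋯ + c_j` and its slacks
`p j = (m_1 + ⋯ + m_j) - P j` for `j < n`, and put `p n = c_{2n-1}`. Then (C1)–(C4) say that `P`
stays below a ceiling built from `m` and from the minima of `p` over the intervals `[i, n]`.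
A point of `S_C((k+1)·m)` is split in two by distributing its slacks with a rounding such as
`v ↦ ⌊v / (k + 1)⌋`. Roundings are monotone, so they commute with the minima, and the two ceilings
add up to the old one; the partial sums are then distributed under the two ceilings by a Riesz
decomposition of monotone functions. -/

section MonotoneRiesz

variable {ι G : Type*} [LinearOrder ι] [LocallyFiniteOrderBot ι]
  [AddCommGroup G] [Lattice G] [AddLeftMono G]

theorem sub_partialSups_sub_monotone {P b : ι → G} (hP : Monotone P) (hb : Monotone b) :
    Monotone fun t ↦ P t - partialSups (P - b) t := by
  intro t₁ t₂ h
  set Q := partialSups (P - b)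
  suffices Q t₂ ≤ (P t₂ - P t₁) + Q t₁ by
    calc P t₁ - Q t₁ = P t₂ - ((P t₂ - P t₁) + Q t₁) := by abel
      _ ≤ P t₂ - Q t₂ := by gcongr
  refine partialSups_le _ _ _ fun r hr ↦ ?_
  rcases le_total r t₁ with hr₁ | hr₁
  · exact (le_partialSups_of_le (P - b) hr₁).trans (le_add_of_nonneg_left (sub_nonneg.2 (hP h)))
  · calc P r - b r ≤ P t₂ - b t₁ := sub_le_sub (hP hr) (hb hr₁)
      _ = (P t₂ - P t₁) + (P t₁ - b t₁) := by abel
      _ ≤ (P t₂ - P t₁) + Q t₁ := by gcongr; exact le_partialSups (P - b) t₁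

theorem exists_monotone_add_eq_of_le_add {s : Set ι} (hs : IsLowerSet s) {P a b : ι → G}
    (hP : Monotone P) (ha : Monotone a) (hb : Monotone b) (h : ∀ t ∈ s, P t ≤ a t + b t) :
    ∃ Q R : ι → G, Monotone Q ∧ Monotone R ∧ Q + R = P ∧ ∀ t ∈ s, Q t ≤ a t ∧ R t ≤ b t := by
  refine ⟨partialSups (P - b), fun t ↦ P t - partialSups (P - b) t, partialSups_monotone _,
    sub_partialSups_sub_monotone hP hb, funext fun t ↦ add_sub_cancel _ _, fun t ht ↦ ⟨?_, ?_⟩⟩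
  · exact partialSups_le _ _ _ fun r hr ↦
      (sub_le_iff_le_add.2 (h r (hs hr ht))).trans (ha hr)
  · exact sub_le_comm.1 (le_partialSups (P - b) t)

end MonotoneRiesz

/-- Monotone maps `φ : ℤ → ℤ` that behave like `v ↦ (k / K) * v` up to rounding: they send
translation by `K` to translation by `k`. They distribute the slacks of a point among summands. -/
structure IsRounding (K k : ℤ) (φ : ℤ → ℤ) : Prop where
  monotone : Monotone φ
  map_zero : φ 0 = 0
  map_add_mul (v M : ℤ) : φ (v + K * M) = φ v + k * M

namespace IsRounding

variable {K k : ℤ} {φ : ℤ → ℤ}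

theorem nonneg (hφ : IsRounding K k φ) {v : ℤ} (hv : 0 ≤ v) : 0 ≤ φ v :=
  hφ.map_zero ▸ hφ.monotone hv

theorem monotoneOn_sub (hφ : IsRounding K k φ) {α : Type*} [Preorder α] {s : Set α}
    {W p : α → ℤ} (h : MonotoneOn (fun j ↦ K * W j - p j) s) :
    MonotoneOn (fun j ↦ k * W j - φ (p j)) s := by
  intro i hi j hj hij
  have hp : p j ≤ p i + K * (W j - W i) := by linarith [h hi hj hij]
  have := (hφ.monotone hp).trans_eq (hφ.map_add_mul _ _)
  linarith

end IsRounding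

theorem isRounding_ediv {K : ℤ} (hK : 0 < K) : IsRounding K 1 (· / K) where
  monotone _ _ h := Int.ediv_le_ediv hK h
  map_zero := Int.zero_ediv K
  map_add_mul v M := by rw [Int.add_mul_ediv_left _ _ hK.ne', one_mul]

theorem isRounding_sub_ediv {K : ℤ} (hK : 0 < K) : IsRounding K (K - 1) (fun v ↦ v - v / K) where
  monotone v w h := by
    have : w / K ≤ v / K + (w - v) := by
      rw [← Int.add_mul_ediv_left _ _ hK.ne']
      exact Int.ediv_le_ediv hK (by nlinarith)
    simp only
    linarith
  map_zero := by simp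
  map_add_mul v M := by rw [Int.add_mul_ediv_left _ _ hK.ne']; ring

/-- The partial sum `c_1 + ⋯ + c_j`, as an integer so that slacks are true differences. -/
def partialSum (c : ℕ → ℕ) (j : ℕ) : ℤ := ∑ l ∈ Icc 1 j, (c l : ℤ)

theorem partialSum_zero (c : ℕ → ℕ) : partialSum c 0 = 0 := by simp [partialSum]

theorem partialSum_succ (c : ℕ → ℕ) (j : ℕ) :
    partialSum c (j + 1) = partialSum c j + c (j + 1) :=
  sum_Icc_succ_top (Nat.le_add_left 1 j) _

theorem partialSum_add (c c' : ℕ → ℕ) : partialSum (c + c') = partialSum c + partialSum c' := by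
  ext j
  simp [partialSum, sum_add_distrib]

theorem partialSum_nsmul (k : ℕ) (c : ℕ → ℕ) (j : ℕ) :
    partialSum (k • c) j = k * partialSum c j := by
  simp [partialSum, mul_sum]

theorem partialSum_monotone (c : ℕ → ℕ) : Monotone (partialSum c) :=
  monotone_nat_of_le_succ fun j ↦ by rw [partialSum_succ]; lia

theorem partialSum_add_sum_Icc (c : ℕ → ℕ) {a b : ℕ} (h : a ≤ b) :
    partialSum c a + ∑ l ∈ Icc (a + 1) b, (c l : ℤ) = partialSum c b := by
  induction b, h using Nat.le_induction with
  | base => simp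
  | succ b hab ih => rw [sum_Icc_succ_top (by lia), partialSum_succ, ← ih, add_assoc]

/-- The minimum of `p i, …, p n`, for `i ≤ n`. -/
def suffixMin (n : ℕ) (p : ℕ → ℤ) (i : ℕ) : ℤ := (Ico i n).fold min (p n) p

theorem le_suffixMin_iff {n i : ℕ} {p : ℕ → ℤ} {x : ℤ} (hi : i ≤ n) :
    x ≤ suffixMin n p i ↔ ∀ k, i ≤ k → k ≤ n → x ≤ p k := by
  simp only [suffixMin, le_fold_min, mem_Ico]
  refine ⟨fun ⟨hn, h⟩ k hik hkn ↦ ?_, fun h ↦ ⟨h n hi le_rfl, fun k hk ↦ h k hk.1 hk.2.le⟩⟩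
  rcases hkn.lt_or_eq with hk | rfl
  exacts [h k ⟨hik, hk⟩, hn]

theorem suffixMin_le {n i k : ℕ} (p : ℕ → ℤ) (hik : i ≤ k) (hkn : k ≤ n) :
    suffixMin n p i ≤ p k :=
  (le_suffixMin_iff (hik.trans hkn)).1 le_rfl k hik hkn

theorem suffixMin_self (n : ℕ) (p : ℕ → ℤ) : suffixMin n p n = p n := by simp [suffixMin]

theorem suffixMin_comp {φ : ℤ → ℤ} (hφ : Monotone φ) (n : ℕ) (p : ℕ → ℤ) (i : ℕ) :
    suffixMin n (φ ∘ p) i = φ (suffixMin n p i) :=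
  fold_hom fun _ _ ↦ hφ.map_min

theorem suffixMin_sub_antitoneOn {n : ℕ} {W p : ℕ → ℤ} (hW : Monotone W)
    (h : MonotoneOn (fun j ↦ W j - p j) (Set.Iic n)) :
    AntitoneOn (fun i ↦ suffixMin n p i - W i) (Set.Iic n) := by
  intro i hi j hj hij
  suffices suffixMin n p j - W j + W i ≤ suffixMin n p i by simp only; linarith
  refine (le_suffixMin_iff hi).2 fun k hik hkn ↦ ?_
  rcases le_total j k with hjk | hkj
  · linarith [suffixMin_le p hjk hkn, hW hij]
  · have hpj : p j ≤ p k + (W j - W k) := by linarith [h (Set.mem_Iic.2 hkn) hj hkj]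
    linarith [suffixMin_le p le_rfl (Set.mem_Iic.1 hj), hW hik]

/-- The upper bound that (C3) and (C4) impose on the partial sums of a point with slacks `p`, where
`W` are the partial sums of the weight. Below `n` it is the partial sum itself; the index
`2n - 1 - i ≥ n` is that of the barred version of the root `α_{1, i+1}`. -/
def ceiling (n : ℕ) (W p : ℕ → ℤ) (j : ℕ) : ℤ :=
  if j < n then W j - p j
  else 2 * W n - W (2 * n - 1 - j) - 2 * p n + suffixMin n p (2 * n - 1 - j)

theorem ceiling_of_lt {n j : ℕ} (W p : ℕ → ℤ) (hj : j < n) : ceiling n W p j = W j - p j :=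
  if_pos hj

theorem ceiling_of_le {n j : ℕ} (W p : ℕ → ℤ) (hj : n ≤ j) :
    ceiling n W p j =
      2 * W n - W (2 * n - 1 - j) - 2 * p n + suffixMin n p (2 * n - 1 - j) :=
  if_neg hj.not_gt

theorem ceiling_monotone {n : ℕ} {W p : ℕ → ℤ} (hW : Monotone W)
    (h : MonotoneOn (fun j ↦ W j - p j) (Set.Iic n)) : Monotone (ceiling n W p) := by
  have tail_mono {i j : ℕ} (hij : i ≤ j) (hj : j ≤ n) :
      suffixMin n p j - W j ≤ suffixMin n p i - W i :=
    suffixMin_sub_antitoneOn hW h (hij.trans hj) hj hij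
  intro i j hij
  rcases lt_or_ge j n with hj | hj
  · rw [ceiling_of_lt W p (hij.trans_lt hj), ceiling_of_lt W p hj]
    exact h (hij.trans hj.le) hj.le hij
  rw [ceiling_of_le W p hj]
  rcases lt_or_ge i n with hi | hi
  · rw [ceiling_of_lt W p hi]
    have hin : W i - p i ≤ W n - p n := h hi.le Set.self_mem_Iic hi.le
    have hjn := tail_mono (show 2 * n - 1 - j ≤ n by lia) le_rfl
    rw [suffixMin_self] at hjn
    linarith
  · rw [ceiling_of_le W p hi]
    linarith [tail_mono (show 2 * n - 1 - j ≤ 2 * n - 1 - i by lia) (by lia)]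

theorem ceiling_add_ceiling {n : ℕ} (W V : ℕ → ℤ) (p : ℕ → ℤ) {f g : ℤ → ℤ} (hf : Monotone f)
    (hg : Monotone g) (hfg : ∀ v, f v + g v = v) (j : ℕ) :
    ceiling n W (f ∘ p) j + ceiling n V (g ∘ p) j = ceiling n (W + V) p j := by
  simp only [ceiling, suffixMin_comp hf, suffixMin_comp hg, Function.comp_apply, Pi.add_apply]
  split_ifs
  · linarith [hfg (p j)]
  · linarith [hfg (p n), hfg (suffixMin n p (2 * n - 1 - j))]

theorem le_ceiling_iff {n i : ℕ} (hi : i < n) (W p : ℕ → ℤ) (x : ℤ) :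
    x ≤ ceiling n W p (2 * n - 1 - i) ↔
      ∀ k, i ≤ k → k ≤ n → x + W i + 2 * p n ≤ 2 * W n + p k := by
  rw [ceiling_of_le W p (by lia), Nat.sub_sub_self (by lia), ← sub_le_iff_le_add',
    le_suffixMin_iff hi.le]
  refine forall₃_congr fun k _ _ ↦ ?_
  constructor <;> intro h <;> linarith

theorem forall_two_le_and_le_iff {n : ℕ} {Q : ℕ → Prop} :
    (∀ j, 2 ≤ j → j ≤ n → Q j) ↔ ∀ i, 1 ≤ i → i < n → Q (i + 1) := by
  refine ⟨fun h i hi hin ↦ h (i + 1) (by lia) hin, fun h j hj hjn ↦ ?_⟩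
  obtain ⟨i, rfl⟩ := Nat.exists_eq_add_of_le' (show 1 ≤ j by lia)
  exact h i (by lia) hjn

theorem mem_SC_iff_partialSum {n : ℕ} {m c : ℕ → ℕ} :
    c ∈ SC n m ↔
      (∀ l, l = 0 ∨ 2 * n - 1 < l → c l = 0) ∧
      (∀ j < n, partialSum c j ≤ partialSum m j) ∧
      partialSum c (n - 1) + c (2 * n - 1) ≤ partialSum m n ∧
      (∀ i, 1 ≤ i → i < n →
        partialSum c (2 * n - 1 - i) + c (2 * n - 1) + partialSum m i ≤ 2 * partialSum m n) ∧
      ∀ i k, 1 ≤ i → i < n → i ≤ k → k < n →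
        partialSum c k + partialSum c (2 * n - 1 - i) + 2 * c (2 * n - 1) + partialSum m i ≤
          2 * partialSum m n + partialSum m k := by
  have index_shift (i : ℕ) : 2 * n - (i + 1) = 2 * n - 1 - i := by lia
  have cast_sum (x : ℕ → ℕ) (j : ℕ) : ((∑ l ∈ Icc 1 j, x l : ℕ) : ℤ) = partialSum x j :=
    Nat.cast_sum _ _
  rw [SC, Set.mem_ofPred_eq, forall_two_le_and_le_iff]
  refine and_congr_right' (and_congr ?_ (and_congr ?_ (and_congr ?_ ?_)))
  · simp only [← cast_sum, Nat.cast_le]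
    refine ⟨fun h j hj ↦ ?_, fun h j _ hj ↦ h j hj⟩
    rcases j.eq_zero_or_pos with rfl | hj₀
    exacts [by simp, h j hj₀ hj]
  · zify [cast_sum]
  · refine forall₃_congr fun i _ hi ↦ ?_
    have weight_split := partialSum_add_sum_Icc m hi.le
    zify [cast_sum]
    rw [index_shift, Nat.add_sub_cancel]
    constructor <;> intro h <;> linarith
  · rw [forall_comm]
    simp only [forall_two_le_and_le_iff]
    rw [forall_comm]
    refine forall₃_congr fun i k _ ↦ forall_congr' fun hi ↦ ?_
    rw [index_shift, Nat.add_sub_cancel]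
    refine forall₂_congr fun _ hk ↦ ?_
    have weight_split := partialSum_add_sum_Icc m hi.le
    have point_split := partialSum_add_sum_Icc c (show k ≤ 2 * n - 1 - i by lia)
    zify [cast_sum]
    constructor <;> intro h <;> linarith

/-- The conditions on slacks `p 0, …, p n` alone that cut out `S_C`, for a weight with partial
sums `W`. -/
structure IsAdmissible (n : ℕ) (W p : ℕ → ℤ) : Prop where
  map_zero : p 0 = 0
  nonneg {j : ℕ} (hj : j ≤ n) : 0 ≤ p j
  monotoneOn_sub : MonotoneOn (fun j ↦ W j - p j) (Set.Iic n)

theorem IsAdmissible.comp_isRounding {n K k : ℕ} {m : ℕ → ℕ} {p : ℕ → ℤ} {φ : ℤ → ℤ}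
    (hp : IsAdmissible n (partialSum (K • m)) p) (hφ : IsRounding K k φ) :
    IsAdmissible n (partialSum (k • m)) (φ ∘ p) where
  map_zero := by rw [Function.comp_apply, hp.map_zero, hφ.map_zero]
  nonneg hj := hφ.nonneg (hp.nonneg hj)
  monotoneOn_sub := by
    have hmono := hp.monotoneOn_sub
    simp only [partialSum_nsmul] at hmono ⊢
    exact hφ.monotoneOn_sub hmono

/-- The numbers `p 0, …, p (n-1)` are the slacks of `c` in (C1), and `p n = c_{2n-1}`. With this
convention (C2) is the last step of the monotonicity of `W - p`, and (C3) is the case `k = n` of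
(C4). -/
structure IsSlack (n : ℕ) (W : ℕ → ℤ) (c : ℕ → ℕ) (p : ℕ → ℤ) : Prop where
  partialSum_eq {j : ℕ} (hj : j < n) : partialSum c j = W j - p j
  last_eq : (c (2 * n - 1) : ℤ) = p n

theorem exists_isSlack (n : ℕ) (W : ℕ → ℤ) (c : ℕ → ℕ) : ∃ p, IsSlack n W c p :=
  ⟨fun j ↦ if j < n then W j - partialSum c j else c (2 * n - 1),
    fun hj ↦ by simp only [if_pos hj, sub_sub_cancel], by simp only [lt_irrefl, if_false]⟩

namespace IsSlack

variable {n : ℕ} {W p : ℕ → ℤ} {c : ℕ → ℕ}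

theorem monotoneOn_sub_iff (hp : IsSlack n W c p) (hn : 0 < n) :
    MonotoneOn (fun j ↦ W j - p j) (Set.Iic n) ↔
      partialSum c (n - 1) + c (2 * n - 1) ≤ W n := by
  have hlast := Nat.sub_one_lt hn.ne'
  rw [hp.last_eq, ← le_sub_iff_add_le, hp.partialSum_eq hlast]
  refine ⟨fun h ↦ h hlast.le Set.self_mem_Iic hlast.le, fun h i _ j hj hij ↦ ?_⟩
  rcases (Set.mem_Iic.1 hj).lt_or_eq with hj | rfl
  · simpa only [hp.partialSum_eq hj, hp.partialSum_eq (hij.trans_lt hj)]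
      using partialSum_monotone c hij
  rcases hij.lt_or_eq with hi | rfl
  · refine le_trans ?_ h
    simpa only [hp.partialSum_eq hi, hp.partialSum_eq hlast]
      using partialSum_monotone c (Nat.le_sub_one_of_lt hi)
  · exact le_rfl

theorem partialSum_le_ceiling_iff (hp : IsSlack n W c p) (hn : 0 < n) :
    (∀ j ≤ 2 * n - 2, partialSum c j ≤ ceiling n W p j) ↔
      ∀ i, 1 ≤ i → i < n → ∀ k, i ≤ k → k ≤ n →
        partialSum c (2 * n - 1 - i) + W i + 2 * c (2 * n - 1) ≤ 2 * W n + p k := by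
  simp only [hp.last_eq]
  refine ⟨fun h i hi hin ↦ (le_ceiling_iff hin W p _).1 (h _ (by lia)), fun h j hj ↦ ?_⟩
  rcases lt_or_ge j n with hjn | hjn
  · rw [ceiling_of_lt W p hjn, hp.partialSum_eq hjn]
  · obtain ⟨i, hi, rfl⟩ : ∃ i, i < n ∧ j = 2 * n - 1 - i := ⟨2 * n - 1 - j, by lia, by lia⟩
    exact (le_ceiling_iff hi W p _).2 (h i (by lia) hi)

theorem isAdmissible_iff (hp : IsSlack n W c p) (hn : 0 < n) (hW₀ : W 0 = 0) :
    IsAdmissible n W p ↔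
      (∀ j < n, partialSum c j ≤ W j) ∧ partialSum c (n - 1) + c (2 * n - 1) ≤ W n := by
  rw [← hp.monotoneOn_sub_iff hn]
  refine ⟨fun h ↦ ⟨fun j hj ↦ ?_, h.monotoneOn_sub⟩, fun ⟨hle, hmono⟩ ↦ ⟨?_, fun hj ↦ ?_, hmono⟩⟩
  · exact (hp.partialSum_eq hj).trans_le (sub_le_self _ (h.nonneg hj.le))
  · linarith [hp.partialSum_eq hn, partialSum_zero c]
  · rcases hj.lt_or_eq with hj | rfl
    · linarith [hle _ hj, hp.partialSum_eq hj]
    · exact hp.last_eq ▸ Int.natCast_nonneg _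

theorem mem_SC_iff {m : ℕ → ℕ} (hp : IsSlack n (partialSum m) c p) (hn : 0 < n) :
    c ∈ SC n m ↔
      (∀ l, l = 0 ∨ 2 * n - 1 < l → c l = 0) ∧ IsAdmissible n (partialSum m) p ∧
      ∀ j ≤ 2 * n - 2, partialSum c j ≤ ceiling n (partialSum m) p j := by
  rw [mem_SC_iff_partialSum, hp.isAdmissible_iff hn (partialSum_zero m),
    hp.partialSum_le_ceiling_iff hn, and_assoc]
  refine and_congr_right' (and_congr_right' (and_congr_right' ?_))
  refine ⟨fun ⟨h₃, h₄⟩ i hi hin k hik hkn ↦ ?_,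
    fun h ↦ ⟨fun i hi hin ↦ ?_, fun i k hi hin hik hk ↦ ?_⟩⟩
  · rcases hkn.lt_or_eq with hk | rfl
    · linarith [h₄ i k hi hin hik hk, hp.partialSum_eq hk]
    · linarith [h₃ i hi hin, hp.last_eq]
  · linarith [h i hi hin n hin.le le_rfl, hp.last_eq]
  · linarith [h i hi hin k hik hk.le, hp.partialSum_eq hk]

end IsSlack

/-- The point with partial sums `Q 0, …, Q (2n-2)` and last coordinate `d`. -/
def ofPartialSums (n : ℕ) (Q : ℕ → ℤ) (d : ℤ) (l : ℕ) : ℕ :=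
  if l = 0 ∨ 2 * n - 1 < l then 0
  else if l = 2 * n - 1 then d.toNat
  else (Q l - Q (l - 1)).toNat

section ofPartialSums

variable {n : ℕ} {Q R : ℕ → ℤ} {d e : ℤ}

theorem ofPartialSums_last (hn : 0 < n) (hd : 0 ≤ d) :
    (ofPartialSums n Q d (2 * n - 1) : ℤ) = d := by
  rw [ofPartialSums, if_neg (by lia), if_pos rfl, Int.toNat_of_nonneg hd]

theorem ofPartialSums_succ (hQ : Monotone Q) {j : ℕ} (hj : j < 2 * n - 2) :
    (ofPartialSums n Q d (j + 1) : ℤ) = Q (j + 1) - Q j := by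
  rw [ofPartialSums, if_neg (by lia), if_neg (by lia), Nat.add_sub_cancel,
    Int.toNat_of_nonneg (sub_nonneg.2 (hQ j.le_succ))]

theorem partialSum_ofPartialSums (hQ : Monotone Q) (hQ₀ : Q 0 = 0) {j : ℕ}
    (hj : j ≤ 2 * n - 2) : partialSum (ofPartialSums n Q d) j = Q j := by
  induction j with
  | zero => rw [partialSum_zero, hQ₀]
  | succ j ih => rw [partialSum_succ, ih (by lia), ofPartialSums_succ hQ hj, add_sub_cancel]

theorem ofPartialSums_add_eq {z : ℕ → ℕ} (hn : 0 < n)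
    (hz : ∀ l, l = 0 ∨ 2 * n - 1 < l → z l = 0) (hQ : Monotone Q) (hR : Monotone R)
    (hd : 0 ≤ d) (he : 0 ≤ e) (hsum : Q + R = partialSum z) (hlast : d + e = z (2 * n - 1)) :
    ofPartialSums n Q d + ofPartialSums n R e = z := by
  funext l
  rw [Pi.add_apply]
  by_cases hl : l = 0 ∨ 2 * n - 1 < l
  · rw [hz l hl, ofPartialSums, ofPartialSums, if_pos hl, if_pos hl]
  zify
  by_cases hl' : l = 2 * n - 1
  · rw [hl', ofPartialSums_last hn hd, ofPartialSums_last hn he, hlast]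
  obtain ⟨j, rfl⟩ : ∃ j, l = j + 1 := ⟨l - 1, by lia⟩
  rw [ofPartialSums_succ hQ (by lia), ofPartialSums_succ hR (by lia)]
  have hj := congrFun hsum j
  have hj' := congrFun hsum (j + 1)
  rw [partialSum_succ] at hj'
  simp only [Pi.add_apply] at hj hj'
  linarith

theorem ofPartialSums_mem_SC {m : ℕ → ℕ} {p : ℕ → ℤ} (hn : 0 < n) (hQ : Monotone Q)
    (hp : IsAdmissible n (partialSum m) p)
    (hQ_eq : ∀ j < n, Q j = partialSum m j - p j)
    (hQ_le : ∀ j ≤ 2 * n - 2, Q j ≤ ceiling n (partialSum m) p j) :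
    ofPartialSums n Q (p n) ∈ SC n m := by
  have hQ₀ : Q 0 = 0 := by rw [hQ_eq 0 hn, partialSum_zero, hp.map_zero, sub_zero]
  have hsum {j : ℕ} (hj : j ≤ 2 * n - 2) : partialSum (ofPartialSums n Q (p n)) j = Q j :=
    partialSum_ofPartialSums hQ hQ₀ hj
  have hslack : IsSlack n (partialSum m) (ofPartialSums n Q (p n)) p :=
    { partialSum_eq := fun hj ↦ (hsum (by lia)).trans (hQ_eq _ hj)
      last_eq := ofPartialSums_last hn (hp.nonneg le_rfl) }
  exact (hslack.mem_SC_iff hn).2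
    ⟨fun l hl ↦ if_pos hl, hp, fun j hj ↦ (hsum hj).trans_le (hQ_le j hj)⟩

end ofPartialSums

theorem add_mem_SC {n : ℕ} {m m' c c' : ℕ → ℕ} (hc : c ∈ SC n m) (hc' : c' ∈ SC n m') :
    c + c' ∈ SC n (m + m') := by
  obtain ⟨h₀, h₁, h₂, h₃, h₄⟩ := hc
  obtain ⟨h₀', h₁', h₂', h₃', h₄'⟩ := hc'
  simp only [SC, Set.mem_ofPred_eq, Pi.add_apply, sum_add_distrib]
  refine ⟨fun l hl ↦ ?_, fun j hj hjn ↦ ?_, ?_, fun j hj hjn ↦ ?_, fun j k hj hjn hjk hk ↦ ?_⟩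
  · rw [h₀ l hl, h₀' l hl]
  · exact add_le_add (h₁ j hj hjn) (h₁' j hj hjn)
  · linarith
  · linarith [h₃ j hj hjn, h₃' j hj hjn]
  · linarith [h₄ j k hj hjn hjk hk, h₄' j k hj hjn hjk hk]

theorem exists_mem_SC_add_eq {n a b : ℕ} {m z : ℕ → ℕ} {f g : ℤ → ℤ} (hn : 0 < n)
    (hf : IsRounding (a + b : ℕ) a f) (hg : IsRounding (a + b : ℕ) b g)
    (hfg : ∀ v, f v + g v = v) (hz : z ∈ SC n ((a + b) • m)) :
    ∃ x ∈ SC n (a • m), ∃ y ∈ SC n (b • m), x + y = z := by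
  obtain ⟨p, hp⟩ := exists_isSlack n (partialSum ((a + b) • m)) z
  obtain ⟨hsupp, hadm, hle⟩ := (hp.mem_SC_iff hn).1 hz
  have hfp := hadm.comp_isRounding hf
  have hgp := hadm.comp_isRounding hg
  have hceil (j : ℕ) : ceiling n (partialSum (a • m)) (f ∘ p) j +
      ceiling n (partialSum (b • m)) (g ∘ p) j = ceiling n (partialSum ((a + b) • m)) p j := by
    rw [ceiling_add_ceiling _ _ p hf.monotone hg.monotone hfg, ← partialSum_add, ← add_nsmul]
  obtain ⟨Q, R, hQ, hR, hQR, hle_ceil⟩ := exists_monotone_add_eq_of_le_add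
    (isLowerSet_Iic (2 * n - 2)) (partialSum_monotone z)
    (ceiling_monotone (partialSum_monotone _) hfp.monotoneOn_sub)
    (ceiling_monotone (partialSum_monotone _) hgp.monotoneOn_sub)
    fun j hj ↦ (hle j hj).trans_eq (hceil j).symm
  -- Below `n` the ceilings add up to exactly `partialSum z`, so both bounds are attained.
  have heq (j : ℕ) (hj : j < n) : Q j = partialSum (a • m) j - (f ∘ p) j ∧
      R j = partialSum (b • m) j - (g ∘ p) j := by
    rw [← ceiling_of_lt _ _ hj, ← ceiling_of_lt _ _ hj]
    have hsum := (congrFun hQR j).trans ((hp.partialSum_eq hj).trans (ceiling_of_lt _ _ hj).symm)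
    rw [← hceil, Pi.add_apply] at hsum
    have := hle_ceil j (show j ≤ 2 * n - 2 by lia)
    constructor <;> linarith
  refine ⟨_, ofPartialSums_mem_SC hn hQ hfp (fun j hj ↦ (heq j hj).1) fun j hj ↦ (hle_ceil j hj).1,
    _, ofPartialSums_mem_SC hn hR hgp (fun j hj ↦ (heq j hj).2) fun j hj ↦ (hle_ceil j hj).2, ?_⟩
  exact ofPartialSums_add_eq hn hsupp hQ hR (hfp.nonneg le_rfl) (hgp.nonneg le_rfl) hQR
    ((hfg _).trans hp.last_eq.symm)

theorem SC_succ_nsmul {n : ℕ} (hn : 0 < n) (k : ℕ) (m : ℕ → ℕ) :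
    SC n ((k + 1) • m) = SC n (k • m) + SC n m := by
  refine Set.Subset.antisymm (fun z hz ↦ ?_) ?_
  · have hK : (0 : ℤ) < (k + 1 : ℕ) := by positivity
    have hfloor : IsRounding (k + 1 : ℕ) (1 : ℕ) (· / ((k + 1 : ℕ) : ℤ)) := isRounding_ediv hK
    have hrest : IsRounding (k + 1 : ℕ) k (fun v ↦ v - v / ((k + 1 : ℕ) : ℤ)) := by
      simpa using isRounding_sub_ediv hK
    simpa only [one_nsmul, Set.mem_add] using
      exists_mem_SC_add_eq hn hrest hfloor (fun _ ↦ sub_add_cancel _ _) hz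
  · rintro _ ⟨x, hx, y, hy, rfl⟩
    rw [succ_nsmul]
    exact add_mem_SC hx hy

theorem SC_nsmul {n k : ℕ} (hn : 0 < n) (hk : 1 ≤ k) (m : ℕ → ℕ) :
    SC n (k • m) = ∑ _t : Fin k, SC n m := by
  induction k, hk using Nat.le_induction with
  | base => simp
  | succ k hk ih => rw [SC_succ_nsmul hn, ih, Fin.sum_univ_castSucc]

/-- Normality of the polytope in type `C`: `S_C(k·m)` is the `k`-fold Minkowski sum of
`S_C(m)` with itself. -/
theorem SC_normal (n k : ℕ) (hn : 2 ≤ n) (hk : 1 ≤ k) (m : ℕ → ℕ) (z : ℕ → ℕ) :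
    z ∈ SC n (k • m) ↔
      ∃ x : Fin k → (ℕ → ℕ), (∀ t, x t ∈ SC n m) ∧ z = ∑ t, x t := by
  rw [SC_nsmul (by lia) hk, Set.mem_fintype_sum]
  simp only [exists_prop, eq_comm]
end
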